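/- arXiv:2212.01273 — 2 statements merged into one kernel-verified Lean document; each statement's English description precedes it below -/
import Mathlib

section
/- Let g = s ⋉ h be a finite-dimensional sympathetic complex Lie algebra with simple Levi subalgebra s whose radical h decomposes into 4 simple s-modules satisfying the convention. Then there is a labeling of the four modules as V_n, V_m, V_p, V_k such that [h,h] = V_p ⊕ V_k and Z(h) = V_k; that is, the derived ideal of h is the sum of exactly two of the four modules and the center of h is exactly one of them. -/
namespace Symp

variable (g : Type*) [LieRing g] [LieAlgebra ℂ g]

/-- A derivation of `g` is inner if it is given by the adjoint action of some element. -/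
def IsInnerDer {g : Type*} [LieRing g] [LieAlgebra ℂ g] (D : LieDerivation ℂ g g) : Prop :=
  ∃ x : g, ∀ y : g, D y = ⁅x, y⁆

/-- `g` is perfect: `[g,g] = g`. -/
def IsPerfectLie : Prop :=
  ⁅(⊤ : LieIdeal ℂ g), (⊤ : LieIdeal ℂ g)⁆ = ⊤

/-- A sympathetic Lie algebra: trivial centre, perfect, all derivations inner. -/
def IsSympathetic : Prop :=
  LieAlgebra.center ℂ g = ⊥ ∧ IsPerfectLie g ∧
    ∀ D : LieDerivation ℂ g g, IsInnerDer D

/-- `s` is a simple Levi subalgebra of `g`: it is a simple Lie algebra and a vector-space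
complement to the radical. -/
def IsSimpleLevi (s : LieSubalgebra ℂ g) : Prop :=
  LieAlgebra.IsSimple ℂ s ∧
    IsCompl s.toSubmodule (LieAlgebra.radical ℂ g).toSubmodule

/-- `s` is a Levi subalgebra of `g` isomorphic to `sl₂(ℂ)`. -/
def IsSl2Levi (s : LieSubalgebra ℂ g) : Prop :=
  Nonempty (s ≃ₗ⁅ℂ⁆ LieAlgebra.SpecialLinear.sl (Fin 2) ℂ) ∧
    IsCompl s.toSubmodule (LieAlgebra.radical ℂ g).toSubmodule

/-- The subspace spanned by all brackets `⁅x, y⁆` with `x ∈ A`, `y ∈ B`. -/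
def lieSpan2 (A B : Submodule ℂ g) : Submodule ℂ g :=
  Submodule.span ℂ {z : g | ∃ x ∈ A, ∃ y ∈ B, z = ⁅x, y⁆}

/-- A subspace of `g` invariant under the bracket action of the subalgebra `s`. -/
def Invariant (s : LieSubalgebra ℂ g) (W : Submodule ℂ g) : Prop :=
  ∀ x ∈ s, ∀ w ∈ W, ⁅x, w⁆ ∈ W

/-- `V` is an irreducible `s`-submodule of `g`. -/
def IsIrreducibleSMod (s : LieSubalgebra ℂ g) (V : Submodule ℂ g) : Prop :=
  V ≠ ⊥ ∧ Invariant g s V ∧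
    ∀ W : Submodule ℂ g, W ≤ V → Invariant g s W → W = ⊥ ∨ W = V

/-- The family `V` is a decomposition of the radical of `g` into irreducible `s`-modules. -/
def IsDecomp (s : LieSubalgebra ℂ g) {k : ℕ} (V : Fin k → Submodule ℂ g) : Prop :=
  (∀ i, IsIrreducibleSMod g s (V i)) ∧ iSupIndep V ∧
    (⨆ i, V i) = (LieAlgebra.radical ℂ g).toSubmodule

/-- The convention: any nonzero bracket of two of the modules equals one of them,
for a unique index. -/
def Convention {k : ℕ} (V : Fin k → Submodule ℂ g) : Prop :=
  ∀ i j, lieSpan2 g (V i) (V j) ≠ ⊥ → ∃! q, lieSpan2 g (V i) (V j) = V q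

/-- The centre `Z(h)` of the radical `h = Rad(g)`, as a subspace of `g`. -/
def centerRad : Submodule ℂ g where
  carrier := {x | x ∈ LieAlgebra.radical ℂ g ∧ ∀ y ∈ LieAlgebra.radical ℂ g, ⁅x, y⁆ = 0}
  add_mem' := by
    rintro a b ⟨ha, ha'⟩ ⟨hb, hb'⟩
    exact ⟨add_mem ha hb, fun y hy => by rw [add_lie, ha' y hy, hb' y hy, add_zero]⟩
  zero_mem' := ⟨zero_mem _, fun y _ => zero_lie y⟩
  smul_mem' := by
    rintro c a ⟨ha, ha'⟩
    exact ⟨SMulMemClass.smul_mem c ha, fun y hy => by rw [smul_lie, ha' y hy, smul_zero]⟩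

/-- The derived subalgebra `[h,h]` of the radical `h = Rad(g)`, as a subspace of `g`. -/
def derivedRad : Submodule ℂ g :=
  lieSpan2 g (LieAlgebra.radical ℂ g).toSubmodule (LieAlgebra.radical ℂ g).toSubmodule

end Symp

namespace SympAux
open Symp

variable {g : Type*} [LieRing g] [LieAlgebra ℂ g]

/-- A derivation killing the Levi factor kills the centre of the radical. -/
lemma der_zero (hinn : ∀ D : LieDerivation ℂ g g, IsInnerDer D)
    (s : LieSubalgebra ℂ g) (hs : IsSimpleLevi g s)
    (D : LieDerivation ℂ g g) (hD : ∀ a ∈ s, D a = 0) (v : g) (hv : v ∈ centerRad g) :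
    D v = 0 := by
  obtain ⟨x, hx⟩ := hinn D
  obtain ⟨hsimp, hcompl⟩ := hs
  have hxtop : x ∈ s.toSubmodule ⊔ (LieAlgebra.radical ℂ g).toSubmodule := by
    rw [hcompl.sup_eq_top]; trivial
  obtain ⟨a, ha, r, hr, rfl⟩ := Submodule.mem_sup.1 hxtop
  have ha' : a ∈ s := ha
  have hr' : r ∈ LieAlgebra.radical ℂ g := hr
  have h0 : ∀ b ∈ s, ⁅a, b⁆ = 0 := by
    intro b hb
    have h1 : ⁅a, b⁆ + ⁅r, b⁆ = 0 := by rw [← add_lie, ← hx, hD b hb]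
    have h2 : ⁅a, b⁆ = -⁅r, b⁆ := eq_neg_of_add_eq_zero_left h1
    have h3 : ⁅a, b⁆ ∈ (LieAlgebra.radical ℂ g).toSubmodule := by
      rw [h2]; exact neg_mem (lie_mem_left ℂ g _ _ _ hr')
    exact Submodule.disjoint_def.1 hcompl.disjoint _ (s.lie_mem ha' hb) h3
  have hc : (⟨a, ha'⟩ : s) ∈ LieAlgebra.center ℂ s := by
    rw [LieModule.mem_maxTrivSubmodule]
    rintro ⟨b, hb⟩
    apply Subtype.ext
    simp only [LieSubalgebra.coe_bracket, ZeroMemClass.coe_zero]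
    rw [← lie_skew, h0 b hb, neg_zero]
  have ha0 : a = 0 := by
    have : LieAlgebra.center ℂ s = ⊥ := LieAlgebra.center_eq_bot ℂ s
    rw [this, LieSubmodule.mem_bot] at hc
    exact congrArg Subtype.val hc
  rw [hx, ha0, zero_add, ← lie_skew, hv.2 r hr', neg_zero]

/-- perfectness gives `[g, rad] = rad`. -/
lemma rad_le (hp : IsPerfectLie g) (s : LieSubalgebra ℂ g) (hs : IsSimpleLevi g s) :
    LieAlgebra.radical ℂ g ≤ ⁅(⊤ : LieIdeal ℂ g), LieAlgebra.radical ℂ g⁆ := by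
  obtain ⟨-, hcompl⟩ := hs
  set R := LieAlgebra.radical ℂ g
  have key : (⁅(⊤ : LieIdeal ℂ g), (⊤ : LieIdeal ℂ g)⁆ : LieIdeal ℂ g).toSubmodule ≤
      s.toSubmodule ⊔ (⁅(⊤ : LieIdeal ℂ g), R⁆ : LieIdeal ℂ g).toSubmodule := by
    rw [LieSubmodule.lieIdeal_oper_eq_linear_span', Submodule.span_le]
    rintro _ ⟨x, -, y, -, rfl⟩
    have ht : ∀ x : g, x ∈ s.toSubmodule ⊔ R.toSubmodule := fun x => by
      rw [hcompl.sup_eq_top]; trivial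
    obtain ⟨a, ha, r, hr, rfl⟩ := Submodule.mem_sup.1 (ht x)
    obtain ⟨b, hb, t, ht, rfl⟩ := Submodule.mem_sup.1 (ht y)
    have : ⁅a + r, b + t⁆ = ⁅a, b⁆ + (⁅a + r, t⁆ + -⁅b, r⁆) := by
      rw [lie_skew]; simp only [add_lie, lie_add]; abel
    rw [this]
    refine Submodule.add_mem_sup (s.lie_mem ha hb) (add_mem ?_ (neg_mem ?_))
    · exact LieSubmodule.lie_mem_lie (LieSubmodule.mem_top _) ht
    · exact LieSubmodule.lie_mem_lie (LieSubmodule.mem_top _) hr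
  intro r hr
  have h1 : r ∈ (⁅(⊤ : LieIdeal ℂ g), (⊤ : LieIdeal ℂ g)⁆ : LieIdeal ℂ g).toSubmodule := by
    have := hp
    unfold IsPerfectLie at this
    rw [this]; trivial
  obtain ⟨a, ha, t, ht, rfl⟩ := Submodule.mem_sup.1 (key h1)
  have htR : t ∈ R := LieSubmodule.lie_le_right _ _ ht
  have haR : a ∈ R.toSubmodule := by
    have := sub_mem hr htR
    simpa using this
  have := Submodule.disjoint_def.1 hcompl.disjoint a ha haR
  rw [this, zero_add]; exact ht

/-- The radical acts nilpotently. -/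
lemma lie_rad_ne [FiniteDimensional ℂ g] (hp : IsPerfectLie g) (s : LieSubalgebra ℂ g)
    (hs : IsSimpleLevi g s) (I : LieIdeal ℂ g) (hI : I ≠ ⊥) :
    ⁅LieAlgebra.radical ℂ g, I⁆ ≠ I := by
  intro heq
  have hnt : Nontrivial I := by
    rw [LieSubmodule.nontrivial_iff_ne_bot]; exact hI
  let M := I →ₗ[ℂ] ℂ
  have : Nontrivial M := inferInstanceAs (Nontrivial (Module.Dual ℂ I))
  have : FiniteDimensional ℂ M := inferInstanceAs (FiniteDimensional ℂ (Module.Dual ℂ I))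
  obtain ⟨χ, hχ⟩ := LieModule.exists_nontrivial_weightSpace_of_isSolvable ℂ
    (LieAlgebra.radical ℂ g) M
  obtain ⟨⟨f, hf⟩, hf0⟩ := exists_ne (0 : LieModule.weightSpace M χ)
  have hf0 : f ≠ 0 := by simpa using hf0
  have hz : ∀ z : g, ⁅z, f⁆ ∈ LieModule.weightSpace M χ := fun z =>
    (LieModule.weightSpaceOfIsLieTower (L := g) ℂ M χ).lie_mem hf
  rw [LieModule.mem_weightSpace] at hf
  have hχ0 : ∀ (z : g) (a : LieAlgebra.radical ℂ g), χ ⁅z, a⁆ = 0 := by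
    intro z a
    have h1 := (LieModule.mem_weightSpace _ _).1 (hz z) a
    have h2 : ⁅z, ⁅a, f⁆⁆ = ⁅⁅z, a⁆, f⁆ + ⁅a, ⁅z, f⁆⁆ := leibniz_lie z a f
    rw [hf a, hf, h1, lie_smul] at h2
    have h3 : χ ⁅z, a⁆ • f = 0 := by simpa using h2
    exact (smul_eq_zero.1 h3).resolve_right hf0
  have hχ1 : ∀ a : LieAlgebra.radical ℂ g, χ a = 0 := by
    rintro ⟨a, ha⟩
    have h1 : a ∈ (⁅(⊤ : LieIdeal ℂ g), LieAlgebra.radical ℂ g⁆ : LieIdeal ℂ g).toSubmodule :=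
      rad_le hp s hs ha
    rw [LieSubmodule.lieIdeal_oper_eq_linear_span'] at h1
    have h2 : Submodule.span ℂ {x : g | ∃ y ∈ (⊤ : LieIdeal ℂ g), ∃ n ∈ LieAlgebra.radical ℂ g,
        ⁅y, n⁆ = x} ≤ (LinearMap.ker χ).map (LieAlgebra.radical ℂ g).toSubmodule.subtype := by
      rw [Submodule.span_le]
      rintro _ ⟨x, -, y, hy, rfl⟩
      exact ⟨(⁅x, (⟨y, hy⟩ : LieAlgebra.radical ℂ g)⁆ : LieAlgebra.radical ℂ g), hχ0 x ⟨y, hy⟩, rfl⟩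
    obtain ⟨b, hb, hb'⟩ := h2 h1
    have : b = ⟨a, ha⟩ := Subtype.ext hb'
    rw [← this]; exact hb
  apply hf0
  have h3 : (⁅LieAlgebra.radical ℂ g, I⁆ : LieIdeal ℂ g).toSubmodule ≤
      (LinearMap.ker f).map I.toSubmodule.subtype := by
    rw [LieSubmodule.lieIdeal_oper_eq_linear_span', Submodule.span_le]
    rintro _ ⟨x, hx, y, hy, rfl⟩
    refine ⟨(⁅x, (⟨y, hy⟩ : I)⁆ : I), ?_, rfl⟩
    have h4 := hf ⟨x, hx⟩
    rw [hχ1, zero_smul] at h4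
    have h5 : (⁅x, f⁆ : I →ₗ[ℂ] ℂ) = 0 := h4
    have h6 := LinearMap.congr_fun h5 ⟨y, hy⟩
    rw [Module.Dual.lie_apply] at h6
    simpa using h6
  rw [heq] at h3
  apply LinearMap.ext
  rintro ⟨y, hy⟩
  obtain ⟨b, hb, hb'⟩ := h3 hy
  have : b = ⟨y, hy⟩ := Subtype.ext hb'
  rw [← this]; exact hb

/-- Diagonal endomorphism. -/
lemma exists_diag {k : ℕ} (V : Fin k → Submodule ℂ g) (h : iSupIndep V) (w : Fin k → ℂ) :
    ∃ E : g →ₗ[ℂ] g, ∀ i, ∀ v ∈ V i, E v = w i • v := by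
  classical
  have hinj := h.dfinsupp_lsum_injective
  obtain ⟨L, hL⟩ := LinearMap.exists_leftInverse_of_injective _ (LinearMap.ker_eq_bot.2 hinj)
  refine ⟨(DFinsupp.lsum ℕ fun i => w i • (V i).subtype) ∘ₗ L, fun i v hv => ?_⟩
  have h1 := LinearMap.congr_fun hL (DFinsupp.single i ⟨v, hv⟩)
  simp at h1
  simp [h1]


lemma lie_mem_span2 {A B : Submodule ℂ g} {x y : g} (hx : x ∈ A) (hy : y ∈ B) :
    ⁅x, y⁆ ∈ lieSpan2 g A B := Submodule.subset_span ⟨x, hx, y, hy, rfl⟩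

lemma span2_comm (A B : Submodule ℂ g) : lieSpan2 g A B = lieSpan2 g B A := by
  have : ∀ A B : Submodule ℂ g, lieSpan2 g A B ≤ lieSpan2 g B A := by
    intro A B
    unfold lieSpan2
    rw [Submodule.span_le]
    rintro _ ⟨x, hx, y, hy, rfl⟩
    rw [← lie_skew]
    exact neg_mem (lie_mem_span2 hy hx)
  exact le_antisymm (this _ _) (this _ _)

lemma no_weight (hinn : ∀ D : LieDerivation ℂ g g, IsInnerDer D)
    (s : LieSubalgebra ℂ g) (hs : IsSimpleLevi g s)
    (V : Fin 4 → Submodule ℂ g) (hdec : IsDecomp g s V) (hconv : Convention g V)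
    (w : Fin 4 → ℂ) (hw : ∀ i j q, lieSpan2 g (V i) (V j) = V q → w i + w j = w q)
    (k : Fin 4) (hk : V k ≤ centerRad g) : w k = 0 := by
  obtain ⟨E, hE⟩ := exists_diag V hdec.2.1 w
  have hcompl := hs.2
  have hVR : ∀ i, V i ≤ (LieAlgebra.radical ℂ g).toSubmodule := fun i => by
    rw [← hdec.2.2]; exact le_iSup V i
  let P := (LieAlgebra.radical ℂ g).toSubmodule.projection s.toSubmodule hcompl.symm
  let D : g →ₗ[ℂ] g := E ∘ₗ P
  have hDs : ∀ a ∈ s, D a = 0 := by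
    intro a ha
    have : P a = 0 := Submodule.projection_apply_of_mem_right hcompl.symm ha
    simp [D, this]
  have hDV : ∀ i, ∀ v ∈ V i, D v = w i • v := by
    intro i v hv
    have : P v = v := Submodule.projection_apply_of_mem_left hcompl.symm (hVR i hv)
    simp [D, this, hE i v hv]
  have htop : ∀ x : g, x ∈ s.toSubmodule ⊔ ⨆ i, V i := fun x => by
    rw [hdec.2.2, hcompl.sup_eq_top]; trivial
  have hder : ∀ x y : g, D ⁅x, y⁆ = ⁅D x, y⁆ + ⁅x, D y⁆ := by
    have hss : ∀ a ∈ s, ∀ b ∈ s, D ⁅a, b⁆ = ⁅D a, b⁆ + ⁅a, D b⁆ := by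
      intro a ha b hb
      rw [hDs a ha, hDs b hb, hDs _ (s.lie_mem ha hb)]; simp
    have hsV : ∀ a ∈ s, ∀ i, ∀ v ∈ V i, D ⁅a, v⁆ = ⁅D a, v⁆ + ⁅a, D v⁆ := by
      intro a ha i v hv
      rw [hDs a ha, hDV i v hv, hDV i _ ((hdec.1 i).2.1 a ha v hv)]; simp
    have hVV : ∀ i, ∀ v ∈ V i, ∀ j, ∀ u ∈ V j, D ⁅v, u⁆ = ⁅D v, u⁆ + ⁅v, D u⁆ := by
      intro i v hv j u hu
      have hm := lie_mem_span2 hv hu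
      rw [hDV i v hv, hDV j u hu, smul_lie, lie_smul, ← add_smul]
      by_cases hb : lieSpan2 g (V i) (V j) = ⊥
      · rw [hb, Submodule.mem_bot] at hm
        simp [hm]
      · obtain ⟨q, hq, -⟩ := hconv i j hb
        rw [hw i j q hq]
        exact hDV q _ (hq ▸ hm)
    -- extend in the second variable, then the first
    have hext : ∀ x : g, (∀ b ∈ s, D ⁅x, b⁆ = ⁅D x, b⁆ + ⁅x, D b⁆) →
        (∀ i, ∀ v ∈ V i, D ⁅x, v⁆ = ⁅D x, v⁆ + ⁅x, D v⁆) →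
        ∀ y, D ⁅x, y⁆ = ⁅D x, y⁆ + ⁅x, D y⁆ := by
      intro x h1 h2 y
      let F : g →ₗ[ℂ] g := D ∘ₗ (LieAlgebra.ad ℂ g x) - LieAlgebra.ad ℂ g (D x)
        - (LieAlgebra.ad ℂ g x) ∘ₗ D
      have hF : ∀ y, y ∈ LinearMap.ker F ↔ D ⁅x, y⁆ = ⁅D x, y⁆ + ⁅x, D y⁆ := by
        intro y
        simp only [F, LinearMap.mem_ker, LinearMap.sub_apply, LinearMap.comp_apply,
          LieAlgebra.ad_apply]
        rw [sub_sub, sub_eq_zero]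
      rw [← hF]
      have : s.toSubmodule ⊔ ⨆ i, V i ≤ LinearMap.ker F :=
        sup_le (fun b hb => (hF b).2 (h1 b hb))
          (iSup_le fun i v hv => (hF v).2 (h2 i v hv))
      exact this (htop y)
    have hsy : ∀ a ∈ s, ∀ y, D ⁅a, y⁆ = ⁅D a, y⁆ + ⁅a, D y⁆ := fun a ha =>
      hext a (hss a ha) (hsV a ha)
    have hswap : ∀ x y, D ⁅x, y⁆ = ⁅D x, y⁆ + ⁅x, D y⁆ → D ⁅y, x⁆ = ⁅D y, x⁆ + ⁅y, D x⁆ := by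
      intro x y h
      rw [← lie_skew, map_neg, h, ← lie_skew (D x) y, ← lie_skew x (D y)]; simp
    have hVy : ∀ i, ∀ v ∈ V i, ∀ y, D ⁅v, y⁆ = ⁅D v, y⁆ + ⁅v, D y⁆ := fun i v hv =>
      hext v (fun b hb => hswap _ _ (hsy b hb v)) (hVV i v hv)
    intro x y
    exact hext x (fun b hb => hswap _ _ (hsy b hb x)) (fun i v hv => hswap _ _ (hVy i v hv x)) y
  let D' : LieDerivation ℂ g g := ⟨D, fun a b => by
    rw [hder a b, ← lie_skew b (D a)]; abel⟩
  obtain ⟨v, hv, hv0⟩ := Submodule.exists_mem_ne_zero_of_ne_bot (hdec.1 k).1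
  have h0 : D v = 0 := der_zero hinn s hs D' hDs v (hk hv)
  rw [hDV k v hv] at h0
  exact (smul_eq_zero.1 h0).resolve_right hv0

lemma no_proj (hinn : ∀ D : LieDerivation ℂ g g, IsInnerDer D)
    (s : LieSubalgebra ℂ g) (hs : IsSimpleLevi g s)
    (W U : Submodule ℂ g) (hW : Invariant g s W) (hU : Invariant g s U)
    (hd : Disjoint W U) (hsup : W ⊔ U = (LieAlgebra.radical ℂ g).toSubmodule)
    (hC : ∀ x ∈ LieAlgebra.radical ℂ g, ∀ y ∈ LieAlgebra.radical ℂ g, ⁅x, y⁆ ∈ U)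
    (hZ : W ≤ centerRad g) : W = ⊥ := by
  have hcompl := hs.2
  have hc : IsCompl W (s.toSubmodule ⊔ U) := by
    constructor
    · have h1 : Disjoint (W ⊔ U) s.toSubmodule := by
        rw [hsup]; exact hcompl.disjoint.symm
      rw [sup_comm]
      exact Disjoint.disjoint_sup_right_of_disjoint_sup_left hd h1
    · rw [codisjoint_iff, sup_left_comm, hsup, hcompl.sup_eq_top]
  let D : g →ₗ[ℂ] g := W.projection _ hc
  have hDW : ∀ x ∈ W, D x = x := fun x hx => Submodule.projection_apply_of_mem_left hc hx
  have hDU : ∀ x ∈ s.toSubmodule ⊔ U, D x = 0 := fun x hx =>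
    Submodule.projection_apply_of_mem_right hc hx
  have hDs : ∀ x ∈ s, D x = 0 := fun x hx => hDU x (Submodule.mem_sup_left hx)
  have hDU' : ∀ x ∈ U, D x = 0 := fun x hx => hDU x (Submodule.mem_sup_right hx)
  have hdecomp : ∀ x : g, ∃ a ∈ s, ∃ u ∈ U, ∃ t ∈ W, x = a + u + t := by
    intro x
    have : x ∈ (s.toSubmodule ⊔ U) ⊔ W := by rw [hc.symm.sup_eq_top]; trivial
    obtain ⟨y, hy, t, ht, rfl⟩ := Submodule.mem_sup.1 this
    obtain ⟨a, ha, u, hu, rfl⟩ := Submodule.mem_sup.1 hy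
    exact ⟨a, ha, u, hu, t, ht, rfl⟩
  have hUR : ∀ u ∈ U, u ∈ LieAlgebra.radical ℂ g := fun u hu => by
    have : U ≤ (LieAlgebra.radical ℂ g).toSubmodule := hsup ▸ le_sup_right
    exact this hu
  have hWR : ∀ u ∈ W, u ∈ LieAlgebra.radical ℂ g := fun u hu => (hZ hu).1
  have hder : ∀ x y : g, D ⁅x, y⁆ = ⁅D x, y⁆ + ⁅x, D y⁆ := by
    intro x y
    obtain ⟨a, ha, u, hu, t, ht, rfl⟩ := hdecomp x
    obtain ⟨b, hb, v, hv, r, hr, rfl⟩ := hdecomp y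
    have e1 : D (a + u + t) = t := by
      rw [map_add, map_add, hDs a ha, hDU' u hu, hDW t ht]; simp
    have e2 : D (b + v + r) = r := by
      rw [map_add, map_add, hDs b hb, hDU' v hv, hDW r hr]; simp
    have z1 : ⁅t, v⁆ = 0 := (hZ ht).2 v (hUR v hv)
    have z2 : ⁅t, r⁆ = 0 := (hZ ht).2 r (hWR r hr)
    have z3 : ⁅u, r⁆ = 0 := by rw [← lie_skew, (hZ hr).2 u (hUR u hu), neg_zero]
    have d1 : D ⁅a, b⁆ = 0 := hDs _ (s.lie_mem ha hb)
    have d2 : D ⁅a, v⁆ = 0 := hDU' _ (hU a ha v hv)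
    have d3 : D ⁅u, b⁆ = 0 := by rw [← lie_skew, map_neg, hDU' _ (hU b hb u hu), neg_zero]
    have d4 : D ⁅u, v⁆ = 0 := hDU' _ (hC u (hUR u hu) v (hUR v hv))
    have d5 : D ⁅a, r⁆ = ⁅a, r⁆ := hDW _ (hW a ha r hr)
    have d6 : D ⁅t, b⁆ = ⁅t, b⁆ := by
      rw [← lie_skew, map_neg, hDW _ (hW b hb t ht)]
    rw [e1, e2]
    simp only [add_lie, lie_add, map_add, z1, z2, z3, d1, d2, d3, d4, d5, d6, map_zero]
    abel
  let D' : LieDerivation ℂ g g := ⟨D, fun a b => by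
    rw [hder a b, ← lie_skew b (D a)]; abel⟩
  rw [eq_bot_iff]
  intro v hv
  have h0 : D v = 0 := der_zero hinn s hs D' hDs v (hZ hv)
  rw [hDW v hv] at h0
  exact h0

/-- the lower central series of the radical -/
noncomputable def C (g : Type*) [LieRing g] [LieAlgebra ℂ g] : ℕ → LieIdeal ℂ g
  | 0 => LieAlgebra.radical ℂ g
  | n + 1 => ⁅LieAlgebra.radical ℂ g, C g n⁆

lemma C_succ_le (n : ℕ) : C g (n + 1) ≤ C g n := LieSubmodule.lie_le_right _ _

lemma C_le (n : ℕ) : C g n ≤ LieAlgebra.radical ℂ g := by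
  induction n with
  | zero => exact le_refl _
  | succ n ih => exact (C_succ_le n).trans ih

lemma lie_C (a b : ℕ) : ∀ x ∈ C g a, ∀ y ∈ C g b, ⁅x, y⁆ ∈ C g (a + b + 1) := by
  induction a generalizing b with
  | zero =>
    intro x hx y hy
    rw [zero_add]
    exact LieSubmodule.lie_mem_lie hx hy
  | succ a ih =>
    intro x hx y hy
    have hx' : x ∈ (⁅LieAlgebra.radical ℂ g, C g a⁆ : LieIdeal ℂ g).toSubmodule := hx
    rw [LieSubmodule.lieIdeal_oper_eq_linear_span'] at hx'
    induction hx' using Submodule.span_induction with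
    | mem x h =>
      obtain ⟨r, hr, c, hc, rfl⟩ := h
      rw [lie_lie]
      refine sub_mem ?_ ?_
      · have := ih b c hc y hy
        have h2 : ⁅r, ⁅c, y⁆⁆ ∈ C g (a + b + 1 + 1) := LieSubmodule.lie_mem_lie hr this
        rwa [show a + 1 + b + 1 = a + b + 1 + 1 by ring]
      · have h1 : ⁅r, y⁆ ∈ C g (b + 1) := LieSubmodule.lie_mem_lie hr hy
        have := ih (b + 1) c hc _ h1
        rwa [show a + 1 + b + 1 = a + (b + 1) + 1 by ring]
    | zero => simp
    | add x z hx1 hz1 h1 h2 =>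
      rw [add_lie]
      have e : ∀ x ∈ Submodule.span ℂ {x : g | ∃ r ∈ LieAlgebra.radical ℂ g, ∃ c ∈ C g a,
          ⁅r, c⁆ = x}, x ∈ C g (a + 1) := by
        intro x hx
        rw [← LieSubmodule.lieIdeal_oper_eq_linear_span'] at hx
        exact hx
      exact add_mem (h1 (e _ hx1)) (h2 (e _ hz1))
    | smul t x hx1 h1 =>
      rw [smul_lie]
      have e : ∀ x ∈ Submodule.span ℂ {x : g | ∃ r ∈ LieAlgebra.radical ℂ g, ∃ c ∈ C g a,
          ⁅r, c⁆ = x}, x ∈ C g (a + 1) := by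
        intro x hx
        rw [← LieSubmodule.lieIdeal_oper_eq_linear_span'] at hx
        exact hx
      exact Submodule.smul_mem (C g _).toSubmodule t (h1 (e _ hx1))

open Classical in
/-- indices of the modules inside the `n`-th term -/
noncomputable def Dx (V : Fin 4 → Submodule ℂ g) (n : ℕ) : Finset (Fin 4) :=
  Finset.univ.filter fun i => V i ≤ (C g n).toSubmodule

lemma mem_Dx {V : Fin 4 → Submodule ℂ g} {n : ℕ} {i : Fin 4} :
    i ∈ Dx V n ↔ V i ≤ (C g n).toSubmodule := by simp [Dx]

lemma idx_mem {V : Fin 4 → Submodule ℂ g} (hi : iSupIndep V) (h0 : ∀ i, V i ≠ ⊥)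
    (S : Finset (Fin 4)) (i : Fin 4) (h : V i ≤ ⨆ j ∈ S, V j) : i ∈ S := by
  by_contra hn
  have h1 : Disjoint (V i) (⨆ j ∈ (S : Set (Fin 4)), V j) := hi.disjoint_biSup hn
  exact h0 i (disjoint_self.1 (h1.mono_right (by simpa using h)))

lemma C_eq {s : LieSubalgebra ℂ g} {V : Fin 4 → Submodule ℂ g} (hdec : IsDecomp g s V)
    (hconv : Convention g V) (n : ℕ) : (C g n).toSubmodule = ⨆ i ∈ Dx V n, V i := by
  refine le_antisymm ?_ (iSup₂_le fun i hi => (mem_Dx (V := V) (n := n) (i := i)).1 hi)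
  induction n with
  | zero =>
    have h : (C g 0).toSubmodule = ⨆ i, V i := hdec.2.2.symm
    rw [h]
    refine iSup_le fun i => ?_
    have : i ∈ Dx V 0 := by rw [mem_Dx, h]; exact le_iSup V i
    exact le_iSup₂_of_le i this le_rfl
  | succ n ih =>
    have e : (C g (n + 1)).toSubmodule =
      (⁅LieAlgebra.radical ℂ g, C g n⁆ : LieIdeal ℂ g).toSubmodule := rfl
    set T := ⨆ i ∈ Dx V (n + 1), V i with hT
    have hVV : ∀ i, ∀ j ∈ Dx V n, ∀ x ∈ V i, ∀ y ∈ V j, ⁅x, y⁆ ∈ T := by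
      intro i j hj x hx y hy
      have hm := lie_mem_span2 hx hy
      by_cases hb : lieSpan2 g (V i) (V j) = ⊥
      · rw [hb, Submodule.mem_bot] at hm
        rw [hm]; exact zero_mem _
      · obtain ⟨q, hq, -⟩ := hconv i j hb
        have hqD : q ∈ Dx V (n + 1) := by
          rw [mem_Dx]
          rw [← hq]
          unfold lieSpan2
          rw [Submodule.span_le]
          rintro _ ⟨x, hx, y, hy, rfl⟩
          have hxR : x ∈ (LieAlgebra.radical ℂ g).toSubmodule := by
            rw [← hdec.2.2]; exact Submodule.mem_iSup_of_mem i hx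
          exact LieSubmodule.lie_mem_lie hxR (mem_Dx.1 hj hy)
        have : V q ≤ T := le_iSup₂_of_le q hqD le_rfl
        exact this (hq ▸ hm)
    rw [e, LieSubmodule.lieIdeal_oper_eq_linear_span', Submodule.span_le]
    rintro _ ⟨x, hx, y, hy, rfl⟩
    have h1 : ∀ i, ∀ x ∈ V i, ⁅x, y⁆ ∈ T := by
      intro i x hx
      have : (⨆ j ∈ Dx V n, V j) ≤ T.comap (LieAlgebra.ad ℂ g x : g →ₗ[ℂ] g) :=
        iSup₂_le fun j hj y hy => hVV i j hj x hx y hy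
      exact this (ih hy)
    have h2 : (⨆ i, V i) ≤ T.comap (LieAlgebra.ad ℂ g y : g →ₗ[ℂ] g) := by
      refine iSup_le fun i x hx => ?_
      have := neg_mem (h1 i x hx)
      rw [lie_skew] at this
      exact this
    have hx' : x ∈ ⨆ i, V i := by rw [hdec.2.2]; exact hx
    have h3 : ⁅y, x⁆ ∈ T := h2 hx'
    have := neg_mem h3
    rw [lie_skew] at this
    exact this

section comb
variable {s : LieSubalgebra ℂ g} {V : Fin 4 → Submodule ℂ g}

lemma Dx_mono (n : ℕ) : Dx V (n + 1) ⊆ Dx V n := fun i hi => by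
  rw [mem_Dx] at hi ⊢
  exact hi.trans (C_succ_le n)

lemma Dx_lt [FiniteDimensional ℂ g] (hp : IsPerfectLie g) (hs : IsSimpleLevi g s)
    (hdec : IsDecomp g s V) (hconv : Convention g V) (n : ℕ) (hn : (Dx V n).Nonempty) :
    Dx V (n + 1) ⊂ Dx V n := by
  refine ⟨Dx_mono n, fun hle => ?_⟩
  have heq : Dx V (n + 1) = Dx V n := le_antisymm (Dx_mono n) hle
  have h1 : (C g (n + 1)).toSubmodule = (C g n).toSubmodule := by
    rw [C_eq hdec hconv, C_eq hdec hconv, heq]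
  have h2 : C g (n + 1) = C g n := LieSubmodule.toSubmodule_injective h1
  refine lie_rad_ne hp s hs (C g n) ?_ h2
  intro hb
  obtain ⟨i, hi⟩ := hn
  rw [mem_Dx, hb] at hi
  exact (hdec.1 i).1 (by simpa using hi)

lemma C_bot (hdec : IsDecomp g s V) (hconv : Convention g V) (n : ℕ) (hn : Dx V n = ∅) :
    ∀ x ∈ C g n, x = 0 := by
  intro x hx
  have : x ∈ (C g n).toSubmodule := hx
  rw [C_eq hdec hconv, hn] at this
  simpa using this

lemma C_center (hdec : IsDecomp g s V) (hconv : Convention g V) (n : ℕ) (hn : Dx V (n + 1) = ∅) :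
    (C g n).toSubmodule ≤ centerRad g := by
  intro x hx
  refine ⟨C_le n hx, fun y hy => ?_⟩
  rw [← lie_skew, C_bot hdec hconv (n + 1) hn ⁅y, x⁆ (LieSubmodule.lie_mem_lie hy hx), neg_zero]

lemma Dx_zero (hdec : IsDecomp g s V) : Dx V 0 = Finset.univ := by
  ext i
  simp only [mem_Dx, Finset.mem_univ, iff_true]
  have h : (C g 0).toSubmodule = ⨆ i, V i := hdec.2.2.symm
  rw [h]; exact le_iSup V i

lemma q_mem (i j q : Fin 4) (hq : lieSpan2 g (V i) (V j) = V q) (a b : ℕ)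
    (hi : i ∈ Dx V a) (hj : j ∈ Dx V b) : q ∈ Dx V (a + b + 1) := by
  rw [mem_Dx] at *
  rw [← hq]
  unfold lieSpan2
  rw [Submodule.span_le]
  rintro _ ⟨x, hx, y, hy, rfl⟩
  exact lie_C a b x (hi hx) y (hj hy)

lemma exists_center [FiniteDimensional ℂ g] (hp : IsPerfectLie g) (hs : IsSimpleLevi g s)
    (hdec : IsDecomp g s V) (hconv : Convention g V) : ∃ k, V k ≤ centerRad g := by
  by_contra hno
  push Not at hno
  have h : ∀ n, (Dx V n).Nonempty := by
    intro n
    induction n with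
    | zero => rw [Dx_zero hdec]; exact ⟨0, Finset.mem_univ _⟩
    | succ n ih =>
      by_contra he
      obtain ⟨k, hk⟩ := ih
      exact hno k ((mem_Dx.1 hk).trans
        (C_center hdec hconv n (Finset.not_nonempty_iff_eq_empty.1 he)))
  have h2 : ∀ n, (Dx V n).card + n ≤ 4 := by
    intro n
    induction n with
    | zero => rw [Dx_zero hdec]; simp
    | succ n ih =>
      have := Finset.card_lt_card (Dx_lt hp hs hdec hconv n (h n))
      omega
  have := h2 5
  omega

lemma step [FiniteDimensional ℂ g] (hp : IsPerfectLie g) (hs : IsSimpleLevi g s)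
    (hdec : IsDecomp g s V) (hconv : Convention g V) (n : ℕ) (i0 j : Fin 4)
    (h0 : ∀ i, i ∈ Dx V 1 ∨ i = i0) (hn : ∀ i ∈ Dx V n, i ∈ Dx V (n + 1) ∨ i = j)
    (hne : (Dx V (n + 1)).Nonempty) :
    ∃ q, lieSpan2 g (V i0) (V j) = V q ∧ q ∈ Dx V (n + 1) ∧ q ∉ Dx V (n + 2) ∧
      ∀ i ∈ Dx V (n + 1), i ∈ Dx V (n + 2) ∨ i = q := by
  have key : (C g (n + 1)).toSubmodule ≤
      lieSpan2 g (V i0) (V j) ⊔ (C g (n + 2)).toSubmodule := by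
    have e : (C g (n + 1)).toSubmodule =
      (⁅LieAlgebra.radical ℂ g, C g n⁆ : LieIdeal ℂ g).toSubmodule := rfl
    rw [e, LieSubmodule.lieIdeal_oper_eq_linear_span', Submodule.span_le]
    rintro _ ⟨x, hx, y, hy, rfl⟩
    have hx' : x ∈ V i0 ⊔ (C g 1).toSubmodule := by
      have h1 : x ∈ ⨆ i, V i := by rw [hdec.2.2]; exact hx
      have h2 : (⨆ i, V i) ≤ V i0 ⊔ (C g 1).toSubmodule := by
        refine iSup_le fun i => ?_
        rcases h0 i with h | rfl
        · exact (mem_Dx.1 h).trans le_sup_right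
        · exact le_sup_left
      exact h2 h1
    have hy' : y ∈ V j ⊔ (C g (n + 1)).toSubmodule := by
      have h1 : y ∈ (C g n).toSubmodule := hy
      rw [C_eq hdec hconv] at h1
      have h2 : (⨆ i ∈ Dx V n, V i) ≤ V j ⊔ (C g (n + 1)).toSubmodule := by
        refine iSup₂_le fun i hi => ?_
        rcases hn i hi with h | rfl
        · exact (mem_Dx.1 h).trans le_sup_right
        · exact le_sup_left
      exact h2 h1
    obtain ⟨v, hv, c, hc, rfl⟩ := Submodule.mem_sup.1 hx'
    obtain ⟨u, hu, t, ht, rfl⟩ := Submodule.mem_sup.1 hy'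
    have : ⁅v + c, u + t⁆ = ⁅v, u⁆ + (⁅v, t⁆ + ⁅c, u + t⁆) := by
      simp only [add_lie, lie_add]; abel
    rw [this]
    refine Submodule.add_mem_sup (lie_mem_span2 hv hu) (add_mem ?_ ?_)
    · have hvR : v ∈ (LieAlgebra.radical ℂ g).toSubmodule := by
        rw [← hdec.2.2]; exact Submodule.mem_iSup_of_mem i0 hv
      exact LieSubmodule.lie_mem_lie hvR ht
    · have := lie_C 1 n c hc (u + t) hy
      rwa [show 1 + n + 1 = n + 2 by ring] at this
  have hlt := Dx_lt hp hs hdec hconv (n + 1) hne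
  by_cases hb : lieSpan2 g (V i0) (V j) = ⊥
  · rw [hb, bot_sup_eq] at key
    exact absurd (fun i hi => mem_Dx.2 ((mem_Dx.1 hi).trans key)) hlt.2
  · obtain ⟨q, hq, -⟩ := hconv i0 j hb
    rw [hq, C_eq hdec hconv (n + 2)] at key
    have h3 : ∀ i ∈ Dx V (n + 1), i ∈ Dx V (n + 2) ∨ i = q := by
      intro i hi
      have h4 : V i ≤ ⨆ l ∈ insert q (Dx V (n + 2)), V l := by
        rw [Finset.iSup_insert]; exact (mem_Dx.1 hi).trans key
      have := idx_mem hdec.2.1 (fun i => (hdec.1 i).1) _ i h4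
      rw [Finset.mem_insert] at this
      exact this.symm
    obtain ⟨r, hr, hr'⟩ := Finset.exists_of_ssubset hlt
    have hrq : r = q := (h3 r hr).resolve_left hr'
    subst hrq
    exact ⟨r, hq, hr, hr', h3⟩

lemma structure_lemma [FiniteDimensional ℂ g] (hinn : ∀ D : LieDerivation ℂ g g, IsInnerDer D)
    (hp : IsPerfectLie g) (hs : IsSimpleLevi g s)
    (hdec : IsDecomp g s V) (hconv : Convention g V) :
    ∃ p k, p ≠ k ∧ Dx V 1 = {p, k} ∧ Dx V 2 = {k} ∧ Dx V 3 = ∅ := by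
  classical
  obtain ⟨z, hz⟩ := exists_center hp hs hdec hconv
  have hlt := Dx_lt hp hs hdec hconv
  have hcard : ∀ n, (Dx V n).Nonempty → (Dx V (n + 1)).card < (Dx V n).card :=
    fun n h => Finset.card_lt_card (hlt n h)
  have hnow : ∀ w : Fin 4 → ℂ, (∀ i, w i ≠ 0) →
      (∀ i j q, lieSpan2 g (V i) (V j) = V q → w i + w j = w q) → False :=
    fun w h0 hw => h0 z (no_weight hinn s hs V hdec hconv w hw z hz)
  have hall : ∀ i, i ∈ Dx V 0 := fun i => by rw [Dx_zero hdec]; exact Finset.mem_univ i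
  have c0 : (Dx V 0).card = 4 := by rw [Dx_zero hdec]; simp
  have c1 : (Dx V 1).card < 4 := by
    have := hcard 0 ⟨0, hall 0⟩
    rwa [c0] at this
  -- the second term is non-trivial
  have h2 : (Dx V 2).Nonempty := by
    by_contra he
    rw [Finset.not_nonempty_iff_eq_empty] at he
    refine hnow (fun i => if i ∈ Dx V 1 then 2 else 1) (fun i => by split_ifs <;> norm_num) ?_
    intro i j q hq
    have a1 := q_mem i j q hq 0 0 (hall i) (hall j)
    have a2 := fun h => q_mem i j q hq 1 0 h (hall j)
    have a3 := fun h => q_mem i j q hq 0 1 (hall i) h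
    simp only [he, Nat.reduceAdd, Finset.notMem_empty, imp_false] at a1 a2 a3
    simp only [a1, a2, a3, if_true, if_false]
    norm_num
  have h1 : (Dx V 1).Nonempty := h2.mono (Dx_mono 1)
  have c2 : (Dx V 2).card < (Dx V 1).card := hcard 1 h1
  have c2p := h2.card_pos
  by_cases h3 : (Dx V 1).card = 3
  · exfalso
    obtain ⟨i0, hi0⟩ : ∃ i0, (Dx V 1)ᶜ = {i0} := by
      rw [← Finset.card_eq_one, Finset.card_compl, h3]; simp
    have hi0' : ∀ i, i ∈ Dx V 1 ∨ i = i0 := by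
      intro i
      by_cases h : i ∈ Dx V 1
      · exact Or.inl h
      · right
        have : i ∈ (Dx V 1)ᶜ := Finset.mem_compl.2 h
        rwa [hi0, Finset.mem_singleton] at this
    obtain ⟨q0, hq0, hq0m, hq0n, hq0a⟩ := step hp hs hdec hconv 0 i0 i0 hi0' (fun i _ => hi0' i) h1
    obtain ⟨q1, hq1, hq1m, hq1n, hq1a⟩ := step hp hs hdec hconv 1 i0 q0 hi0' hq0a h2
    simp only [zero_add, Nat.reduceAdd] at *
    have e1 : Dx V 1 ⊆ insert q0 (Dx V 2) := fun i hi => by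
      rw [Finset.mem_insert]; exact (hq0a i hi).symm
    have e2 : Dx V 2 ⊆ insert q1 (Dx V 3) := fun i hi => by
      rw [Finset.mem_insert]; exact (hq1a i hi).symm
    have f1 := (Finset.card_le_card e1).trans (Finset.card_insert_le _ _)
    have f2 := (Finset.card_le_card e2).trans (Finset.card_insert_le _ _)
    have f3 := hcard 2 h2
    have h3n : (Dx V 3).Nonempty := by rw [← Finset.card_pos]; omega
    have f4 := hcard 3 h3n
    simp only [Nat.reduceAdd] at f3 f4
    have h4 : Dx V 4 = ∅ := by rw [← Finset.card_eq_zero]; omega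
    have m32 : ∀ i, i ∈ Dx V 3 → i ∈ Dx V 2 := fun i h => Dx_mono 2 h
    have m21 : ∀ i, i ∈ Dx V 2 → i ∈ Dx V 1 := fun i h => Dx_mono 1 h
    have hVinj : ∀ a b, V a = V b → a = b := fun a b h => by
      have : a ∈ ({b} : Finset (Fin 4)) :=
        idx_mem hdec.2.1 (fun i => (hdec.1 i).1) {b} a (by simp [h])
      simpa using this
    let w : Fin 4 → ℂ := fun i => if i ∈ Dx V 3 then 4 else if i ∈ Dx V 2 then 3 else
      if i ∈ Dx V 1 then 2 else 1
    have w4 : ∀ i, i ∈ Dx V 3 → w i = 4 := fun i h => if_pos h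
    have w3 : ∀ i, i ∉ Dx V 3 → i ∈ Dx V 2 → w i = 3 := fun i h h' => by
      simp only [w, if_neg h, if_pos h']
    have w2 : ∀ i, i ∉ Dx V 2 → i ∈ Dx V 1 → w i = 2 := fun i h h' => by
      simp only [w, if_neg (fun h'' => h (m32 i h'')), if_neg h, if_pos h']
    have w1 : ∀ i, i ∉ Dx V 1 → w i = 1 := fun i h => by
      simp only [w, if_neg (fun h'' => h (m21 i (m32 i h''))), if_neg (fun h'' => h (m21 i h'')),
        if_neg h]
    have lev : ∀ i, i ∈ Dx V 3 ∨ (i ∉ Dx V 3 ∧ i ∈ Dx V 2) ∨ (i ∉ Dx V 2 ∧ i ∈ Dx V 1) ∨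
        i ∉ Dx V 1 := by
      intro i
      by_cases h1 : i ∈ Dx V 1
      · by_cases h2 : i ∈ Dx V 2
        · by_cases h3 : i ∈ Dx V 3
          · exact Or.inl h3
          · exact Or.inr (Or.inl ⟨h3, h2⟩)
        · exact Or.inr (Or.inr (Or.inl ⟨h2, h1⟩))
      · exact Or.inr (Or.inr (Or.inr h1))
    refine hnow w (fun i => by simp only [w]; split_ifs <;> norm_num) ?_
    have sym : ∀ i j q, lieSpan2 g (V i) (V j) = V q → lieSpan2 g (V j) (V i) = V q :=
      fun i j q h => by rw [span2_comm]; exact h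
    have m4 : ∀ i, i ∉ Dx V 4 := fun i h => by rw [h4] at h; simp at h
    intro i j q hq
    have A := q_mem i j q hq
    have a30 := fun h => A 3 0 h (hall j)
    have a03 := fun h => A 0 3 (hall i) h
    have a20 := fun h => A 2 0 h (hall j)
    have a02 := fun h => A 0 2 (hall i) h
    have a21 := A 2 1
    have a12 := A 1 2
    have a11 := A 1 1
    have b00 : i ∉ Dx V 1 → j ∉ Dx V 1 → q = q0 := by
      intro hi hj
      have := (hi0' i).resolve_left hi
      have := (hi0' j).resolve_left hj
      subst i j
      exact hVinj _ _ (hq.symm.trans hq0)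
    have b01 : i ∉ Dx V 1 → j ∈ Dx V 1 → j ∉ Dx V 2 → q = q1 := by
      intro hi hj hj'
      have := (hi0' i).resolve_left hi
      have := (hq0a j hj).resolve_left hj'
      subst i j
      exact hVinj _ _ (hq.symm.trans hq1)
    have b10 : j ∉ Dx V 1 → i ∈ Dx V 1 → i ∉ Dx V 2 → q = q1 := by
      intro hj hi hi'
      have := (hi0' j).resolve_left hj
      have := (hq0a i hi).resolve_left hi'
      subst i j
      exact hVinj _ _ ((sym _ _ _ hq).symm.trans hq1)
    simp only [Nat.reduceAdd] at a30 a03 a20 a02 a21 a12 a11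
    have n7 := m4 q
    rcases lev i with hi | ⟨hi', hi⟩ | ⟨hi', hi⟩ | hi
    · exact absurd (a30 hi) n7
    · rcases lev j with hj | ⟨hj', hj⟩ | ⟨hj', hj⟩ | hj
      · exact absurd (a03 hj) n7
      · exact absurd (a21 hi (m21 j hj)) n7
      · exact absurd (a21 hi hj) n7
      · rw [w3 i hi' hi, w1 j hj, w4 q (a20 hi)]; norm_num
    · rcases lev j with hj | ⟨hj', hj⟩ | ⟨hj', hj⟩ | hj
      · exact absurd (a03 hj) n7
      · exact absurd (a12 hi hj) n7
      · rw [w2 i hi' hi, w2 j hj' hj, w4 q (a11 hi hj)]; norm_num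
      · rw [w2 i hi' hi, w1 j hj, b10 hj hi hi', w3 q1 hq1n hq1m]; norm_num
    · rcases lev j with hj | ⟨hj', hj⟩ | ⟨hj', hj⟩ | hj
      · exact absurd (a03 hj) n7
      · rw [w1 i hi, w3 j hj' hj, w4 q (a02 hj)]; norm_num
      · rw [w1 i hi, w2 j hj' hj, b01 hi hj hj', w3 q1 hq1n hq1m]; norm_num
      · rw [w1 i hi, w1 j hj, b00 hi hj, w2 q0 hq0n hq0m]; norm_num
  · have d2 : (Dx V 2).card = 1 := by omega
    have d1 : (Dx V 1).card = 2 := by omega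
    have f3 := hcard 2 h2
    obtain ⟨k, hk⟩ := Finset.card_eq_one.1 d2
    obtain ⟨p, hp, hpn⟩ := Finset.exists_of_ssubset (hlt 1 h1)
    have hpk : p ≠ k := by
      rintro rfl
      apply hpn
      simp only [Nat.reduceAdd]
      rw [hk]; simp
    refine ⟨p, k, hpk, ?_, hk, ?_⟩
    · symm
      apply Finset.eq_of_subset_of_card_le
      · intro i hi
        rw [Finset.mem_insert, Finset.mem_singleton] at hi
        rcases hi with rfl | rfl
        · exact hp
        · apply Dx_mono 1
          simp only [Nat.reduceAdd]
          rw [hk]; simp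
      · rw [d1, Finset.card_pair hpk]
    · rw [← Finset.card_eq_zero]
      simp only [Nat.reduceAdd] at f3
      omega

lemma inv_sup {A B : Submodule ℂ g} (hA : Invariant g s A) (hB : Invariant g s B) :
    Invariant g s (A ⊔ B) := by
  intro x hx w hw
  obtain ⟨a, ha, b, hb, rfl⟩ := Submodule.mem_sup.1 hw
  rw [lie_add]
  exact Submodule.add_mem_sup (hA x hx a ha) (hB x hx b hb)

lemma inv_inf {A B : Submodule ℂ g} (hA : Invariant g s A) (hB : Invariant g s B) :
    Invariant g s (A ⊓ B) := fun x hx w hw => ⟨hA x hx w hw.1, hB x hx w hw.2⟩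

lemma inv_biSup (hdec : IsDecomp g s V) (S : Finset (Fin 4)) :
    Invariant g s (⨆ i ∈ S, V i) := by
  intro x hx w hw
  have : (⨆ i ∈ S, V i) ≤ (⨆ i ∈ S, V i).comap (LieAlgebra.ad ℂ g x : g →ₗ[ℂ] g) := by
    refine iSup₂_le fun i hi v hv => ?_
    have h1 : V i ≤ ⨆ i ∈ S, V i := le_iSup₂_of_le i hi le_rfl
    exact h1 ((hdec.1 i).2.1 x hx v hv)
  exact this hw

lemma inv_C (n : ℕ) : Invariant g s (C g n).toSubmodule := fun _ _ _ hw => (C g n).lie_mem hw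

lemma inv_center : Invariant g s (centerRad g) := by
  rintro x hx w ⟨hw, hw'⟩
  refine ⟨lie_mem_right ℂ g _ _ _ hw, fun y hy => ?_⟩
  rw [lie_lie, hw' y hy, hw' ⁅x, y⁆ (lie_mem_right ℂ g _ _ _ hy)]
  simp

lemma exists_compl (hdec : IsDecomp g s V) (M : Submodule ℂ g) (hM : Invariant g s M)
    (hMR : M ≤ (LieAlgebra.radical ℂ g).toSubmodule) :
    ∃ N, Invariant g s N ∧ Disjoint M N ∧ M ⊔ N = (LieAlgebra.radical ℂ g).toSubmodule := by
  classical
  obtain ⟨J, hJ, hmax⟩ := (Set.toFinite {J : Finset (Fin 4) | Disjoint M (⨆ i ∈ J, V i)}).exists_maximal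
    ⟨∅, by simp⟩
  refine ⟨⨆ i ∈ J, V i, inv_biSup hdec J, hJ, le_antisymm (sup_le hMR ?_) ?_⟩
  · rw [← hdec.2.2]; exact iSup₂_le fun i _ => le_iSup V i
  · rw [← hdec.2.2]
    refine iSup_le fun i => ?_
    by_contra hn
    rcases (hdec.1 i).2.2 ((M ⊔ ⨆ i ∈ J, V i) ⊓ V i) inf_le_right
      (inv_inf (inv_sup hM (inv_biSup hdec J)) (hdec.1 i).2.1) with h | h
    · have h1 : Disjoint (M ⊔ ⨆ i ∈ J, V i) (V i) := disjoint_iff.2 h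
      have h2 : Disjoint M ((⨆ i ∈ J, V i) ⊔ V i) :=
        Disjoint.disjoint_sup_right_of_disjoint_sup_left hJ h1
      have h3 : insert i J ⊆ J := hmax (y := insert i J)
        (by
          change Disjoint M (⨆ l ∈ insert i J, V l)
          rw [Finset.iSup_insert, sup_comm]; exact h2)
        (Finset.subset_insert i J)
      have h4 : i ∈ J := h3 (Finset.mem_insert_self i J)
      exact hn (le_sup_of_le_right (le_iSup₂_of_le i h4 le_rfl))
    · exact hn (inf_eq_right.1 h)

lemma center_eq (hinn : ∀ D : LieDerivation ℂ g g, IsInnerDer D) (hs : IsSimpleLevi g s)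
    (hdec : IsDecomp g s V) (hconv : Convention g V) (p k : Fin 4)
    (h1 : Dx V 1 = {p, k}) (h2 : Dx V 2 = {k}) (h3 : Dx V 3 = ∅) : centerRad g = V k := by
  classical
  have e1 : (C g 1).toSubmodule = V p ⊔ V k := by
    rw [C_eq hdec hconv, h1, Finset.iSup_insert, Finset.iSup_singleton]
  have e2 : (C g 2).toSubmodule = V k := by
    rw [C_eq hdec hconv, h2, Finset.iSup_singleton]
  have hk : V k ≤ centerRad g := by
    rw [← e2]; exact C_center hdec hconv 2 h3
  -- the intersection with the derived ideal
  have hint : ∀ z ∈ centerRad g, z ∈ (C g 1).toSubmodule → z ∈ V k := by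
    intro z hz hz1
    rw [e1] at hz1
    obtain ⟨a, ha, b, hb, rfl⟩ := Submodule.mem_sup.1 hz1
    have haZ : a ∈ centerRad g := by simpa using sub_mem hz (hk hb)
    rcases (hdec.1 p).2.2 (centerRad g ⊓ V p) inf_le_right
      (inv_inf inv_center (hdec.1 p).2.1) with h | h
    · have : a ∈ centerRad g ⊓ V p := ⟨haZ, ha⟩
      rw [h, Submodule.mem_bot] at this
      rw [this, zero_add]; exact hb
    · exfalso
      have hpZ : V p ≤ centerRad g := inf_eq_right.1 h
      have hCZ : (C g 1).toSubmodule ≤ centerRad g := by rw [e1]; exact sup_le hpZ hk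
      have hC2 : C g 2 = ⊥ := by
        change ⁅LieAlgebra.radical ℂ g, C g 1⁆ = ⊥
        rw [LieSubmodule.lie_eq_bot_iff]
        intro x hx m hm
        rw [← lie_skew, (hCZ hm).2 x hx, neg_zero]
      apply (hdec.1 k).1
      rw [← e2, hC2]; rfl
  refine le_antisymm (fun z hz => hint z hz ?_) hk
  by_contra hzn
  let S : Finset (Fin 4) := Finset.univ.erase k
  let T := ⨆ i ∈ S, V i
  have hTk : Disjoint (V k) T := by
    have := hdec.2.1.disjoint_biSup (x := k) (y := (S : Set (Fin 4))) (by simp [S])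
    simpa [T] using this
  have hzT : z ∈ T ⊔ V k := by
    have h4 : z ∈ ⨆ i, V i := by rw [hdec.2.2]; exact hz.1
    have h5 : (⨆ i, V i) ≤ T ⊔ V k := by
      refine iSup_le fun i => ?_
      by_cases hik : i = k
      · subst hik; exact le_sup_right
      · exact le_sup_of_le_left (le_iSup₂_of_le i (by simp [S, hik]) le_rfl)
    exact h5 h4
  obtain ⟨t, ht, b, hb, rfl⟩ := Submodule.mem_sup.1 hzT
  have htZ : t ∈ centerRad g := by simpa using sub_mem hz (hk hb)
  have hWinv : Invariant g s (centerRad g ⊓ T) := inv_inf inv_center (inv_biSup hdec S)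
  have hWC : Disjoint (centerRad g ⊓ T) (C g 1).toSubmodule := by
    rw [Submodule.disjoint_def]
    intro x hx hx1
    exact Submodule.disjoint_def.1 hTk x (hint x hx.1 hx1) hx.2
  have hWR : centerRad g ⊓ T ≤ (LieAlgebra.radical ℂ g).toSubmodule := fun x hx => hx.1.1
  obtain ⟨N, hN, hdis, hsup⟩ := exists_compl hdec (centerRad g ⊓ T ⊔ (C g 1).toSubmodule)
    (inv_sup hWinv (inv_C 1)) (sup_le hWR (C_le 1))
  have hbot := no_proj hinn s hs (centerRad g ⊓ T) ((C g 1).toSubmodule ⊔ N) hWinv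
    (inv_sup (inv_C 1) hN) (Disjoint.disjoint_sup_right_of_disjoint_sup_left hWC hdis)
    (by rw [← sup_assoc]; exact hsup)
    (fun x hx y hy => Submodule.mem_sup_left (LieSubmodule.lie_mem_lie hx hy)) inf_le_left
  have ht0 : t ∈ centerRad g ⊓ T := ⟨htZ, ht⟩
  rw [hbot, Submodule.mem_bot] at ht0
  apply hzn
  rw [ht0, zero_add, e1]
  exact Submodule.mem_sup_right hb

lemma derived_eq : derivedRad g = (C g 1).toSubmodule := by
  change lieSpan2 g _ _ = (⁅LieAlgebra.radical ℂ g, LieAlgebra.radical ℂ g⁆ : LieIdeal ℂ g).toSubmodule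
  rw [LieSubmodule.lieIdeal_oper_eq_linear_span']
  unfold lieSpan2
  congr 1
  ext z
  constructor
  · rintro ⟨x, hx, y, hy, rfl⟩; exact ⟨x, hx, y, hy, rfl⟩
  · rintro ⟨x, hx, y, hy, rfl⟩; exact ⟨x, hx, y, hy, rfl⟩

end comb

lemma exists_perm : ∀ p k : Fin 4, p ≠ k → ∃ e : Equiv.Perm (Fin 4), e 2 = p ∧ e 3 = k := by
  intro p k h
  refine ⟨(Equiv.swap 3 k).trans (Equiv.swap ((Equiv.swap 3 k) 2) p), ?_, ?_⟩
  · simp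
  · revert p k; decide

end SympAux

/-- for a sympathetic Lie algebra whose radical decomposes into 4 simple
modules satisfying the convention, the modules may be labeled `V_n, V_m, V_p, V_k` so that
`[h,h] = V_p ⊕ V_k` and `Z(h) = V_k`. -/
theorem stmt9 (g : Type*) [LieRing g] [LieAlgebra ℂ g] [FiniteDimensional ℂ g]
    (hsymp : Symp.IsSympathetic g)
    (s : LieSubalgebra ℂ g) (hs : Symp.IsSimpleLevi g s)
    (V : Fin 4 → Submodule ℂ g) (hdec : Symp.IsDecomp g s V)
    (hconv : Symp.Convention g V) :
    ∃ e : Equiv.Perm (Fin 4),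
      Symp.derivedRad g = V (e 2) ⊔ V (e 3) ∧ Symp.centerRad g = V (e 3) := by
  obtain ⟨-, hp, hinn⟩ := hsymp
  obtain ⟨p, k, hpk, h1, h2, h3⟩ := SympAux.structure_lemma hinn hp hs hdec hconv
  obtain ⟨e, he2, he3⟩ := SympAux.exists_perm p k hpk
  refine ⟨e, ?_, ?_⟩
  · rw [he2, he3, SympAux.derived_eq, SympAux.C_eq hdec hconv, h1, Finset.iSup_insert,
      Finset.iSup_singleton]
  · rw [he3]; exact SympAux.center_eq hinn hs hdec hconv p k h1 h2 h3
end

section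
/- Let g = sl2(C) ⋉ h be a finite-dimensional sympathetic complex Lie algebra whose Levi subalgebra is isomorphic to sl2(C) and whose radical h decomposes into 4 simple sl2(C)-modules V_n, V_m, V_p, V_k satisfying the convention, with Z(h) = V_k. Then dim_C g is odd. -/
namespace Symp

/-- Combinatorial data extracted from the bracket of the four modules. -/
structure Comb (B : Fin 4 → Fin 4 → Fin 4 → Prop) (p : Fin 4 → ℕ) : Prop where
  comm : ∀ i j q, B i j q → B j i q
  par : ∀ i j q, B i j q → (p q + p i + p j) % 2 = 0
  cyc1 : ∀ i j, ¬ B i j i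
  cyc2 : ∀ i j k q, B i j q → ¬ B q k i
  cen : ∀ j q, ¬ B 3 j q
  noncen : ∀ i, i ≠ 3 → ∃ j q, B i j q
  func : ∀ i j q q', B i j q → B i j q' → q = q'
  wt : ∀ w : Fin 4 → ℕ, (∀ i j q, B i j q → w q = w i + w j) → ∀ i, w i = 0
  jac : ∀ i j c k r, B i j c → B c k r →
    (∃ t, B j k t ∧ ∃ u, B i t u) ∨ (∃ t, B i k t ∧ ∃ u, B j t u)

lemma Comb.case_odd_sub {B : Fin 4 → Fin 4 → Fin 4 → Prop} {p : Fin 4 → ℕ} (h : Comb B p)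
    {x y e : Fin 4} (hxy : x ≠ y) (hxe : x ≠ e) (hye : y ≠ e)
    (hx3 : x ≠ 3) (hy3 : y ≠ 3) (he3 : e ≠ 3)
    (hall : ∀ i, i = x ∨ i = y ∨ i = e ∨ i = 3)
    (hxB : ∀ k t, B x k t → k = x ∧ t = 3)
    (hBx : ∀ i j, ¬ B i j x)
    (hyye : B y y e) : False := by
  have h1 : ∀ r, ¬ B e e r := by
    intro r hr
    obtain ⟨t, ht, u, hu⟩ | ⟨t, ht, u, hu⟩ := h.jac _ _ _ _ _ hyye hr
    all_goals
      rcases hall t with rfl | rfl | rfl | rfl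
      · exact hBx _ _ ht
      · exact h.cyc1 _ _ ht
      · exact h.cyc1 _ _ (h.comm _ _ _ ht)
      · exact h.cen _ _ (h.comm _ _ _ hu)
  have := h.wt (fun i => if i = x then 3 else if i = y then 2 else if i = e then 4 else 6) ?_ x
  · simp at this
  · intro i j q hB
    have c0 := hxB
    have c1 := h.comm _ _ _ hB
    have c2 := h.cen
    have c3 := h.cyc1
    have c4 := h.func
    have c5 := hBx i j
    rcases hall i with rfl | rfl | rfl | rfl <;> rcases hall j with rfl | rfl | rfl | rfl <;>
    rcases hall q with rfl | rfl | rfl | rfl <;> grind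

lemma Comb.case_one {B : Fin 4 → Fin 4 → Fin 4 → Prop} {p : Fin 4 → ℕ} (h : Comb B p)
    {x y e : Fin 4} (hxy : x ≠ y) (hxe : x ≠ e) (hye : y ≠ e)
    (hx3 : x ≠ 3) (hy3 : y ≠ 3) (he3 : e ≠ 3)
    (hall : ∀ i, i = x ∨ i = y ∨ i = e ∨ i = 3)
    (px : p x % 2 = 1) (py : p y % 2 = 0) (pe : p e % 2 = 0) (p3 : p 3 % 2 = 0) : False := by
  have hBx : ∀ i j, ¬ B i j x := by
    intro i j hB
    have c1 := h.par _ _ _ hB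
    have c2 := h.cyc1 x
    have c3 := h.comm _ _ _ hB
    rcases hall i with rfl | rfl | rfl | rfl <;> rcases hall j with rfl | rfl | rfl | rfl <;>
      first | omega | exact c2 _ hB | exact c2 _ c3
  have hxk : ∀ k t, B x k t → k = x := by
    intro k t hB
    have c1 := h.par _ _ _ hB
    have c2 := hBx x k
    rcases hall k with rfl | rfl | rfl | rfl <;> rcases hall t with rfl | rfl | rfl | rfl <;>
      first | rfl | omega | exact absurd hB c2
  obtain ⟨k, c, hc⟩ := h.noncen x hx3
  obtain rfl := hxk _ _ hc
  have hc3 : c = 3 := by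
    by_contra hne
    obtain ⟨j, r, hr⟩ := h.noncen c hne
    obtain ⟨t, ht, u, hu⟩ | ⟨t, ht, u, hu⟩ := h.jac _ _ _ _ _ hc hr
    all_goals
      have := hxk _ _ hu
      subst this
      exact hBx _ _ ht
  subst hc3
  have hxB : ∀ j t, B k j t → j = k ∧ t = 3 := by
    intro j t hB
    obtain rfl := hxk _ _ hB
    exact ⟨rfl, h.func _ _ _ _ hB hc⟩
  by_cases h1 : B y y e
  · exact h.case_odd_sub hxy hxe hye hx3 hy3 he3 hall hxB hBx h1
  by_cases h2 : B e e y
  · exact h.case_odd_sub hxe hxy hye.symm hx3 he3 hy3 (fun i => by have := hall i; tauto) hxB hBx h2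
  have := h.wt (fun i => if i = 3 then 2 else 1) ?_ 3
  · simp at this
  · intro i j q hB
    have c0 := hxB
    have c1 := h.comm _ _ _ hB
    have c2 := h.cen
    have c3 := h.cyc1
    have c4 := h.func
    have c5 := hBx i j
    rcases hall i with rfl | rfl | rfl | rfl <;> rcases hall j with rfl | rfl | rfl | rfl <;>
    rcases hall q with rfl | rfl | rfl | rfl <;> grind

lemma Comb.case_three_sub {B : Fin 4 → Fin 4 → Fin 4 → Prop} {p : Fin 4 → ℕ} (h : Comb B p)
    {x y e : Fin 4} (hxy : x ≠ y) (hxe : x ≠ e) (hye : y ≠ e)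
    (hx3 : x ≠ 3) (hy3 : y ≠ 3) (he3 : e ≠ 3)
    (hall : ∀ i, i = x ∨ i = y ∨ i = e ∨ i = 3)
    (px : p x % 2 = 1) (py : p y % 2 = 1) (pe : p e % 2 = 0) (p3 : p 3 % 2 = 1)
    (hB1 : B x e y) : False := by
  have d1 : ¬ B x y e := fun hb => h.cyc2 _ _ _ _ (h.comm _ _ _ hB1) (h.comm _ _ _ hb)
  have d2 : ¬ B y y e := fun hb => h.cyc2 _ _ _ _ (h.comm _ _ _ hB1) hb
  have d3 : ¬ B y e x := fun hb => h.cyc2 _ _ _ _ hB1 hb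
  have := h.wt (fun i => if i = x then 1 else if i = y then 3 else if i = e then 2 else 5) ?_ x
  · simp at this
  · intro i j q hB
    have c0 := h.par _ _ _ hB
    have c1 := h.comm _ _ _ hB
    have c2 := h.cen
    have c3 := h.cyc1
    have c4 := h.func
    rcases hall i with rfl | rfl | rfl | rfl <;> rcases hall j with rfl | rfl | rfl | rfl <;>
    rcases hall q with rfl | rfl | rfl | rfl <;> first | omega | grind

lemma Comb.case_three {B : Fin 4 → Fin 4 → Fin 4 → Prop} {p : Fin 4 → ℕ} (h : Comb B p)
    {x y e : Fin 4} (hxy : x ≠ y) (hxe : x ≠ e) (hye : y ≠ e)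
    (hx3 : x ≠ 3) (hy3 : y ≠ 3) (he3 : e ≠ 3)
    (hall : ∀ i, i = x ∨ i = y ∨ i = e ∨ i = 3)
    (px : p x % 2 = 1) (py : p y % 2 = 1) (pe : p e % 2 = 0) (p3 : p 3 % 2 = 1) : False := by
  by_cases h1 : B x e y
  · exact h.case_three_sub hxy hxe hye hx3 hy3 he3 hall px py pe p3 h1
  by_cases h2 : B y e x
  · exact h.case_three_sub hxy.symm hye hxe hy3 hx3 he3 (fun i => by have := hall i; tauto)
      py px pe p3 h2
  have := h.wt (fun i => if i = x then 1 else if i = y then 1 else if i = e then 2 else 3) ?_ x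
  · simp at this
  · intro i j q hB
    have c0 := h.par _ _ _ hB
    have c1 := h.comm _ _ _ hB
    have c2 := h.cen
    have c3 := h.cyc1
    rcases hall i with rfl | rfl | rfl | rfl <;> rcases hall j with rfl | rfl | rfl | rfl <;>
    rcases hall q with rfl | rfl | rfl | rfl <;> first | omega | grind

lemma Comb.even_sum {B : Fin 4 → Fin 4 → Fin 4 → Prop} {p : Fin 4 → ℕ} (h : Comb B p) :
    (p 0 + p 1 + p 2 + p 3) % 2 = 0 := by
  have hall : ∀ i : Fin 4, i = 0 ∨ i = 1 ∨ i = 2 ∨ i = 3 := by decide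
  rcases Nat.mod_two_eq_zero_or_one (p 0) with h0 | h0 <;>
  rcases Nat.mod_two_eq_zero_or_one (p 1) with h1 | h1 <;>
  rcases Nat.mod_two_eq_zero_or_one (p 2) with h2 | h2 <;>
  rcases Nat.mod_two_eq_zero_or_one (p 3) with h3 | h3 <;> try omega
  · exfalso
    -- only the centre is odd
    have := h.wt (fun i => if i = 3 then 1 else 0) ?_ 3
    · simp at this
    · intro i j q hB
      have c0 := h.par _ _ _ hB
      have c1 := h.comm _ _ _ hB
      have c2 := h.cen
      rcases hall i with rfl | rfl | rfl | rfl <;> rcases hall j with rfl | rfl | rfl | rfl <;>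
      rcases hall q with rfl | rfl | rfl | rfl <;> first | omega | grind
  · exact (h.case_one (x := 2) (y := 0) (e := 1) (by decide) (by decide) (by decide) (by decide)
      (by decide) (by decide) (by decide) h2 h0 h1 h3).elim
  · exact (h.case_one (x := 1) (y := 0) (e := 2) (by decide) (by decide) (by decide) (by decide)
      (by decide) (by decide) (by decide) h1 h0 h2 h3).elim
  · exact (h.case_three (x := 1) (y := 2) (e := 0) (by decide) (by decide) (by decide) (by decide)
      (by decide) (by decide) (by decide) h1 h2 h0 h3).elim
  · exact (h.case_one (x := 0) (y := 1) (e := 2) (by decide) (by decide) (by decide) (by decide)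
      (by decide) (by decide) (by decide) h0 h1 h2 h3).elim
  · exact (h.case_three (x := 0) (y := 2) (e := 1) (by decide) (by decide) (by decide) (by decide)
      (by decide) (by decide) (by decide) h0 h2 h1 h3).elim
  · exact (h.case_three (x := 0) (y := 1) (e := 2) (by decide) (by decide) (by decide) (by decide)
      (by decide) (by decide) (by decide) h0 h1 h2 h3).elim
  · exfalso
    have := h.wt (fun i => if i = 3 then 2 else 1) ?_ 3
    · simp at this
    · intro i j q hB
      have c0 := h.par _ _ _ hB
      have c1 := h.comm _ _ _ hB
      have c2 := h.cen
      rcases hall i with rfl | rfl | rfl | rfl <;> rcases hall j with rfl | rfl | rfl | rfl <;>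
      rcases hall q with rfl | rfl | rfl | rfl <;> first | omega | grind

end Symp
namespace Symp

/-- In a perfect Lie algebra with a Levi subalgebra, every element of the radical is a sum of
brackets `⁅x, y⁆` with `y` in the radical. -/
lemma radical_le_span {g : Type*} [LieRing g] [LieAlgebra ℂ g]
    (hperf : IsPerfectLie g) (s : LieSubalgebra ℂ g)
    (hs : IsCompl s.toSubmodule (LieAlgebra.radical ℂ g).toSubmodule) :
    LieAlgebra.radical ℂ g ≤ ⁅(⊤ : LieIdeal ℂ g), LieAlgebra.radical ℂ g⁆ := by
  set h := LieAlgebra.radical ℂ g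
  have key : ∀ z : g, z ∈ s.toSubmodule ⊔ (⁅(⊤ : LieIdeal ℂ g), h⁆).toSubmodule := by
    intro z
    have hz : z ∈ ⁅(⊤ : LieIdeal ℂ g), (⊤ : LieIdeal ℂ g)⁆ := by
      rw [show ⁅(⊤ : LieIdeal ℂ g), (⊤ : LieIdeal ℂ g)⁆ = ⊤ from hperf]; trivial
    rw [← LieSubmodule.mem_toSubmodule, LieSubmodule.lieIdeal_oper_eq_linear_span'] at hz
    refine Submodule.span_le.2 ?_ hz
    rintro _ ⟨a, -, b, -, rfl⟩
    have ha : a ∈ s.toSubmodule ⊔ h.toSubmodule := by rw [hs.sup_eq_top]; trivial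
    have hb : b ∈ s.toSubmodule ⊔ h.toSubmodule := by rw [hs.sup_eq_top]; trivial
    obtain ⟨a1, ha1, a2, ha2, rfl⟩ := Submodule.mem_sup.1 ha
    obtain ⟨b1, hb1, b2, hb2, rfl⟩ := Submodule.mem_sup.1 hb
    have e : ⁅a1 + a2, b1 + b2⁆ = ⁅a1, b1⁆ + (⁅a1 + a2, b2⁆ - ⁅b1, a2⁆) := by
      rw [add_lie, add_lie, lie_add, lie_add, ← lie_skew b1 a2]; abel
    simp only [SetLike.mem_coe]
    rw [e]
    refine Submodule.add_mem_sup (s.lie_mem ha1 hb1) (sub_mem ?_ ?_)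
    · exact LieSubmodule.lie_mem_lie (by trivial) hb2
    · exact LieSubmodule.lie_mem_lie (by trivial) ha2
  intro z hz
  obtain ⟨a, ha, b, hb, rfl⟩ := Submodule.mem_sup.1 (key z)
  have hbh : b ∈ h := LieSubmodule.lie_le_right _ _ hb
  have hah : a ∈ h := by simpa using sub_mem hz hbh
  have : a = 0 := by
    have := hs.inf_eq_bot
    have h2 : a ∈ s.toSubmodule ⊓ h.toSubmodule := ⟨ha, hah⟩
    rw [this] at h2; simpa using h2
  subst this
  simpa using hb

/-- The radical has a nonzero invariant in any nonzero finite dimensional module. -/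
lemma exists_invariant {g : Type*} [LieRing g] [LieAlgebra ℂ g] [FiniteDimensional ℂ g]
    (hrad : LieAlgebra.radical ℂ g ≤ ⁅(⊤ : LieIdeal ℂ g), LieAlgebra.radical ℂ g⁆)
    (M : Type*) [AddCommGroup M] [Module ℂ M] [LieRingModule g M] [LieModule ℂ g M]
    [FiniteDimensional ℂ M] [Nontrivial M] :
    ∃ m : M, m ≠ 0 ∧ ∀ x ∈ LieAlgebra.radical ℂ g, ⁅x, m⁆ = 0 := by
  obtain ⟨χ, hχ⟩ := LieModule.exists_nontrivial_weightSpace_of_isSolvable ℂ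
    (LieAlgebra.radical ℂ g) M
  obtain ⟨⟨m, hm⟩, hm0⟩ := exists_ne (0 : LieModule.weightSpace M χ)
  have hm0' : m ≠ 0 := fun hh => hm0 (by ext; exact hh)
  refine ⟨m, hm0', ?_⟩
  intro x hx
  have hx' := hrad hx
  rw [← LieSubmodule.mem_toSubmodule, LieSubmodule.lieIdeal_oper_eq_linear_span'] at hx'
  have : Submodule.span ℂ {t | ∃ x ∈ (⊤ : LieIdeal ℂ g), ∃ n ∈ LieAlgebra.radical ℂ g, ⁅x, n⁆ = t}
      ≤ LinearMap.ker ((LieModule.toEnd ℂ g M : g →ₗ[ℂ] Module.End ℂ M).flip m) := by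
    rw [Submodule.span_le]
    rintro _ ⟨a, -, b, hb, rfl⟩
    have hzm : ⁅a, m⁆ ∈ LieModule.weightSpace M χ :=
      (LieModule.weightSpaceOfIsLieTower ℂ M (L := g) χ).lie_mem (x := a) (m := m) hm
    rw [LieModule.mem_weightSpace] at hm hzm
    have e1 : ⁅b, m⁆ = χ ⟨b, hb⟩ • m := hm ⟨b, hb⟩
    have e2 : ⁅b, ⁅a, m⁆⁆ = χ ⟨b, hb⟩ • ⁅a, m⁆ := hzm ⟨b, hb⟩
    simp [e1, e2]
  have := this hx'
  simpa using this

lemma eq_bot_of_le_lieSpan2 {g : Type*} [LieRing g] [LieAlgebra ℂ g] [FiniteDimensional ℂ g]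
    (hrad : LieAlgebra.radical ℂ g ≤ ⁅(⊤ : LieIdeal ℂ g), LieAlgebra.radical ℂ g⁆)
    (W : Submodule ℂ g)
    (hW : W ≤ lieSpan2 g (LieAlgebra.radical ℂ g).toSubmodule W) : W = ⊥ := by
  set D : LieIdeal ℂ g := LieSubmodule.lieSpan ℂ g (W : Set g) with hD
  have hWD : W ≤ D.toSubmodule := LieSubmodule.subset_lieSpan
  have hDD : D ≤ ⁅LieAlgebra.radical ℂ g, D⁆ := by
    rw [hD, LieSubmodule.lieSpan_le, ← hD]
    intro w hw
    have := hW hw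
    refine Submodule.span_le (p := (⁅LieAlgebra.radical ℂ g, D⁆ : LieIdeal ℂ g).toSubmodule).2
      ?_ this
    rintro _ ⟨x, hx, y, hy, rfl⟩
    exact LieSubmodule.lie_mem_lie hx (hWD hy)
  by_contra hne
  obtain ⟨w, hw, hw0⟩ := Submodule.exists_mem_ne_zero_of_ne_bot hne
  have : Nontrivial D := ⟨⟨⟨w, hWD hw⟩, 0, fun hh => hw0 (congrArg Subtype.val hh)⟩⟩
  obtain ⟨f, hf0, hf⟩ := exists_invariant hrad (Module.Dual ℂ D)
  apply hf0
  ext ⟨d, hd⟩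
  have hd' := hDD hd
  rw [← LieSubmodule.mem_toSubmodule, LieSubmodule.lieIdeal_oper_eq_linear_span'] at hd'
  have : Submodule.span ℂ {t | ∃ x ∈ LieAlgebra.radical ℂ g, ∃ n ∈ D, ⁅x, n⁆ = t}
      ≤ (LinearMap.ker f).map D.toSubmodule.subtype := by
    rw [Submodule.span_le]
    rintro _ ⟨a, ha, b, hb, rfl⟩
    have hmem : ⁅a, b⁆ ∈ D := D.lie_mem hb
    refine ⟨⟨⁅a, b⁆, hmem⟩, ?_, rfl⟩
    have := LinearMap.congr_fun (hf a ha) ⟨b, hb⟩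
    rw [Module.Dual.lie_apply, LinearMap.zero_apply, neg_eq_zero] at this
    exact this
  obtain ⟨d', hd1, hd2⟩ := this hd'
  have : d' = ⟨d, hd⟩ := Subtype.ext hd2
  subst this
  exact hd1

end Symp
namespace Symp

lemma exists_sl2_triple {s : Type*} [LieRing s] [LieAlgebra ℂ s]
    (φ : s ≃ₗ⁅ℂ⁆ LieAlgebra.SpecialLinear.sl (Fin 2) ℂ) :
    ∃ H E F : s, IsSl2Triple H E F ∧ (∀ x : s, ∃ a b c : ℂ, x = a • E + b • F + c • H) ∧
      Module.finrank ℂ s = 3 := by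
  have mem : ∀ a b c : ℂ, !![a, b; c, -a] ∈ LieAlgebra.SpecialLinear.sl (Fin 2) ℂ := by
    intro a b c
    change Matrix.trace (!![a, b; c, -a] : Matrix (Fin 2) (Fin 2) ℂ) = 0
    simp [Matrix.trace]
  let m : ℂ → ℂ → ℂ → LieAlgebra.SpecialLinear.sl (Fin 2) ℂ := fun a b c => ⟨_, mem a b c⟩
  have hm : ∀ x : LieAlgebra.SpecialLinear.sl (Fin 2) ℂ, ∃ a b c, x = m a b c := by
    rintro ⟨x, hx⟩
    have hx' : Matrix.trace x = 0 := hx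
    rw [Matrix.trace_fin_two] at hx'
    refine ⟨x 0 0, x 0 1, x 1 0, Subtype.ext ?_⟩
    ext i j
    fin_cases i <;> fin_cases j <;> simp [m]
    linear_combination hx'
  have hlin : ∀ a b c : ℂ, m a b c = b • m 0 1 0 + c • m 0 0 1 + a • m 1 0 0 := by
    intro a b c
    apply Subtype.ext
    change _ = b • !![(0:ℂ), 1; 0, -0] + c • !![(0:ℂ), 0; 1, -0] + a • !![(1:ℂ), 0; 0, -1]
    ext i j
    fin_cases i <;> fin_cases j <;> simp [m]
  have hspan : ∀ x : s, ∃ a b c : ℂ,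
      x = a • φ.symm (m 0 1 0) + b • φ.symm (m 0 0 1) + c • φ.symm (m 1 0 0) := by
    intro x
    obtain ⟨a, b, c, h⟩ := hm (φ x)
    refine ⟨b, c, a, ?_⟩
    rw [← map_smul, ← map_smul, ← map_smul, ← map_add, ← map_add, ← hlin, ← h,
      LieEquiv.symm_apply_apply]
  refine ⟨φ.symm (m 1 0 0), φ.symm (m 0 1 0), φ.symm (m 0 0 1), ⟨?_, ?_, ?_, ?_⟩, hspan, ?_⟩
  · intro h
    have h2 : m 1 0 0 = 0 := by
      have := congrArg φ h
      simpa using this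
    have := congrFun (congrFun (congrArg Subtype.val h2) 0) 0
    simp [m] at this
  · rw [← LieEquiv.map_lie]
    congr 1
    apply Subtype.ext
    rw [LieAlgebra.SpecialLinear.sl_bracket]
    ext i j
    fin_cases i <;> fin_cases j <;> simp [m]
  · rw [← LieEquiv.map_lie, ← map_nsmul]
    congr 1
    apply Subtype.ext
    rw [LieAlgebra.SpecialLinear.sl_bracket]
    change _ = 2 • !![(0:ℂ), 1; 0, -0]
    ext i j
    fin_cases i <;> fin_cases j <;> simp [m] <;> norm_num
  · rw [← LieEquiv.map_lie, ← map_nsmul, ← map_neg]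
    congr 1
    apply Subtype.ext
    rw [LieAlgebra.SpecialLinear.sl_bracket]
    change _ = -(2 • !![(0:ℂ), 0; 1, -0])
    ext i j
    fin_cases i <;> fin_cases j <;> simp [m] <;> norm_num
  · have e : (Fin 3 → ℂ) ≃ₗ[ℂ] LieAlgebra.SpecialLinear.sl (Fin 2) ℂ :=
      LinearEquiv.ofBijective
        { toFun := fun v => m (v 0) (v 1) (v 2)
          map_add' := by
            intro u v
            rw [hlin, hlin (u 0), hlin (v 0)]
            simp only [Pi.add_apply, add_smul]; abel
          map_smul' := by
            intro r v
            rw [hlin, hlin (v 0)]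
            simp only [Pi.smul_apply, smul_add, smul_smul, smul_eq_mul, RingHom.id_apply] }
        (by
          constructor
          · intro u v huv
            have h := congrArg Subtype.val huv
            have h0 := congrFun (congrFun h 0) 0
            have h1 := congrFun (congrFun h 0) 1
            have h2 := congrFun (congrFun h 1) 0
            simp [m] at h0 h1 h2
            ext i
            fin_cases i <;> simpa
          · intro x
            obtain ⟨a, b, c, rfl⟩ := hm x
            exact ⟨![a, b, c], by simp⟩)
    have h1 := (φ.toLinearEquiv.trans e.symm).finrank_eq
    simpa using h1

lemma irr_structure {g : Type*} [LieRing g] [LieAlgebra ℂ g] [FiniteDimensional ℂ g]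
    (s : LieSubalgebra ℂ g) (H E F : s) (t : IsSl2Triple H E F)
    (hspan : ∀ x : s, ∃ a b c : ℂ, x = a • E + b • F + c • H)
    (V : Submodule ℂ g) (hV : IsIrreducibleSMod g s V) :
    ∃ n : ℕ, Module.finrank ℂ V = n + 1 ∧ ∃ b : Fin (n + 1) → g,
      LinearIndependent ℂ b ∧ V = Submodule.span ℂ (Set.range b) ∧
      ∀ k, ⁅(H : g), b k⁆ = ((n : ℂ) - 2 * (k : ℕ)) • b k := by
  obtain ⟨hV0, hVi, hVirr⟩ := hV
  let N : LieSubmodule ℂ s g :=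
    { V with lie_mem := fun {x m} hm => hVi x x.2 m hm }
  obtain ⟨w, hw, hw0⟩ := Submodule.exists_mem_ne_zero_of_ne_bot hV0
  have : Nontrivial N := ⟨⟨⟨w, hw⟩, 0, fun hh => hw0 (congrArg Subtype.val hh)⟩⟩
  obtain ⟨μ, ⟨m, hmV⟩, hm0, P0⟩ := t.exists_hasPrimitiveVectorWith (R := ℂ) (M := N)
  have P : t.HasPrimitiveVectorWith m μ :=
    { ne_zero := fun hh => hm0 (Subtype.ext hh)
      lie_h := congrArg Subtype.val P0.lie_h
      lie_e := congrArg Subtype.val P0.lie_e }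
  obtain ⟨n, hn⟩ := P.exists_nat
  let ψ : ℕ → g := fun k => (LieModule.toEnd ℂ s g F ^ k) m
  have hF : ∀ k, ⁅F, ψ k⁆ = ψ (k + 1) := fun k => P.lie_f_pow_toEnd_f k
  have hH : ∀ k, ⁅H, ψ k⁆ = (μ - 2 * k) • ψ k := fun k => P.lie_h_pow_toEnd_f k
  have hE : ∀ k, ⁅E, ψ (k + 1)⁆ = ((k + 1) * (μ - k)) • ψ k := fun k => P.lie_e_pow_succ_toEnd_f k
  have hE0 : ⁅E, ψ 0⁆ = 0 := by simpa [ψ] using P.lie_e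
  have htop : ψ (n + 1) = 0 := P.pow_toEnd_f_eq_zero_of_eq_nat hn
  have hne : ∀ k ≤ n, ψ k ≠ 0 := fun k hk => P.pow_toEnd_f_ne_zero_of_eq_nat hn hk
  have hψV : ∀ k, ψ k ∈ V := by
    intro k
    induction k with
    | zero => exact hmV
    | succ k ih => rw [← hF]; exact hVi F F.2 _ ih
  let b : Fin (n + 1) → g := fun k => ψ k
  have hli : LinearIndependent ℂ b := by
    refine Module.End.eigenvectors_linearIndependent' (LieModule.toEnd ℂ s g H)
      (fun k : Fin (n + 1) => μ - 2 * ((k : ℕ) : ℂ)) ?_ b ?_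
    · intro i j hij
      ext
      simpa using hij
    · intro k
      rw [Module.End.hasEigenvector_iff]
      exact ⟨Module.End.mem_eigenspace_iff.2 (hH k), hne k (by omega)⟩
  have hmem : ∀ k ≤ n, ψ k ∈ Submodule.span ℂ (Set.range b) := fun k hk =>
    Submodule.subset_span ⟨⟨k, by omega⟩, rfl⟩
  have hWV : Submodule.span ℂ (Set.range b) = V := by
    have hle : Submodule.span ℂ (Set.range b) ≤ V := by
      rw [Submodule.span_le]; rintro _ ⟨k, rfl⟩; exact hψV k
    refine (hVirr _ hle ?_).resolve_left ?_
    · intro x hx w hw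
      obtain ⟨a1, a2, a3, hx'⟩ := hspan ⟨x, hx⟩
      have hxw : ∀ w : g, ⁅x, w⁆ = a1 • ⁅E, w⁆ + a2 • ⁅F, w⁆ + a3 • ⁅H, w⁆ := by
        intro w
        change ⁅(⟨x, hx⟩ : s), w⁆ = _
        rw [hx']
        simp only [add_lie, smul_lie]
      have : Submodule.span ℂ (Set.range b) ≤
          (Submodule.span ℂ (Set.range b)).comap (LieModule.toEnd ℂ g g x) := by
        rw [Submodule.span_le]
        rintro _ ⟨⟨k, hk⟩, rfl⟩
        simp only [Submodule.comap_coe, Set.mem_preimage, SetLike.mem_coe,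
          LieModule.toEnd_apply_apply]
        change ⁅x, ψ k⁆ ∈ _
        rw [hxw]
        refine add_mem (add_mem ?_ ?_) ?_ <;> refine Submodule.smul_mem _ _ ?_
        · cases k with
          | zero => rw [hE0]; exact zero_mem _
          | succ k => rw [hE]; exact Submodule.smul_mem _ _ (hmem k (by omega))
        · rw [hF]
          rcases Nat.lt_or_ge k n with h | h
          · exact hmem _ h
          · have : k = n := by omega
            subst this
            rw [htop]; exact zero_mem _
        · rw [hH]; exact Submodule.smul_mem _ _ (hmem k (by omega))
      exact this hw
    · intro hh
      have := hmem 0 (by omega)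
      rw [hh] at this
      exact hne 0 (by omega) (by simpa using this)
  refine ⟨n, ?_, b, hli, hWV.symm, ?_⟩
  · rw [← hWV, finrank_span_eq_card hli]; simp
  · intro k
    rw [← hn]; exact hH k

lemma eigen_in_span {g : Type*} [AddCommGroup g] [Module ℂ g] (T : Module.End ℂ g)
    {ι : Type*} [Fintype ι] (b : ι → g) (hli : LinearIndependent ℂ b) (μ : ι → ℂ)
    (hb : ∀ k, T (b k) = μ k • b k) (w : g) (hw : w ∈ Submodule.span ℂ (Set.range b))
    (hw0 : w ≠ 0) (c : ℂ) (hc : T w = c • w) : ∃ k, c = μ k := by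
  obtain ⟨a, rfl⟩ := (Submodule.mem_span_range_iff_exists_fun ℂ).1 hw
  by_contra hcon
  push Not at hcon
  apply hw0
  have h1 : ∑ k, (a k * (μ k - c)) • b k = 0 := by
    have : T (∑ k, a k • b k) - c • ∑ k, a k • b k = 0 := by rw [hc, sub_self]
    rw [← this, map_sum, Finset.smul_sum, ← Finset.sum_sub_distrib]
    refine Finset.sum_congr rfl fun k _ => ?_
    rw [map_smul, hb, smul_smul, smul_smul, ← sub_smul]
    congr 1; ring
  have h2 := Fintype.linearIndependent_iff.1 hli _ h1
  refine Finset.sum_eq_zero fun k _ => ?_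
  have h3 := (mul_eq_zero.1 (h2 k)).resolve_right (sub_ne_zero.2 (hcon k).symm)
  rw [h3, zero_smul]

lemma parity_of_bracket {g : Type*} [LieRing g] [LieAlgebra ℂ g] (H : g)
    (n1 n2 n3 : ℕ) (b1 : Fin (n1 + 1) → g) (b2 : Fin (n2 + 1) → g) (b3 : Fin (n3 + 1) → g)
    (h1 : ∀ k, ⁅H, b1 k⁆ = ((n1 : ℂ) - 2 * (k : ℕ)) • b1 k)
    (h2 : ∀ k, ⁅H, b2 k⁆ = ((n2 : ℂ) - 2 * (k : ℕ)) • b2 k)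
    (h3 : ∀ k, ⁅H, b3 k⁆ = ((n3 : ℂ) - 2 * (k : ℕ)) • b3 k)
    (hli : LinearIndependent ℂ b3)
    (hB : lieSpan2 g (Submodule.span ℂ (Set.range b1)) (Submodule.span ℂ (Set.range b2)) =
      Submodule.span ℂ (Set.range b3)) :
    (n3 + n1 + n2) % 2 = 0 := by
  have hex : ∃ i j, ⁅b1 i, b2 j⁆ ≠ 0 := by
    by_contra hcon
    push Not at hcon
    have hz : ∀ x ∈ Submodule.span ℂ (Set.range b1), ∀ y ∈ Submodule.span ℂ (Set.range b2),
        ⁅x, y⁆ = 0 := by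
      intro x hx y hy
      induction hx using Submodule.span_induction with
      | zero => simp
      | add u v _ _ hu hv => rw [add_lie, hu, hv, add_zero]
      | smul c u _ hu => rw [smul_lie, hu, smul_zero]
      | mem u hu =>
        obtain ⟨i, rfl⟩ := hu
        induction hy using Submodule.span_induction with
        | zero => simp
        | add u v _ _ hu hv => rw [lie_add, hu, hv, add_zero]
        | smul c u _ hu => rw [lie_smul, hu, smul_zero]
        | mem u hu =>
          obtain ⟨j, rfl⟩ := hu
          exact hcon i j
    have h0 : b3 0 ∈ lieSpan2 g (Submodule.span ℂ (Set.range b1))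
        (Submodule.span ℂ (Set.range b2)) := by
      rw [hB]; exact Submodule.subset_span ⟨0, rfl⟩
    have : lieSpan2 g (Submodule.span ℂ (Set.range b1))
        (Submodule.span ℂ (Set.range b2)) ≤ ⊥ := by
      refine Submodule.span_le.2 ?_
      rintro _ ⟨x, hx, y, hy, rfl⟩
      simp [hz x hx y hy]
    exact hli.ne_zero 0 (by simpa using this h0)
  obtain ⟨i, j, hij⟩ := hex
  have hmem : ⁅b1 i, b2 j⁆ ∈ Submodule.span ℂ (Set.range b3) := by
    rw [← hB]
    exact Submodule.subset_span ⟨_, Submodule.subset_span ⟨i, rfl⟩, _,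
      Submodule.subset_span ⟨j, rfl⟩, rfl⟩
  obtain ⟨k, hk⟩ := eigen_in_span (LieModule.toEnd ℂ g g H) b3 hli _ h3 _ hmem hij
    (((n1 : ℂ) - 2 * (i : ℕ)) + ((n2 : ℂ) - 2 * (j : ℕ))) (by
      rw [LieModule.toEnd_apply_apply, leibniz_lie, h1, h2, smul_lie, lie_smul, add_smul])
  have hk' : ((n1 : ℤ) - 2 * (i : ℕ)) + ((n2 : ℤ) - 2 * (j : ℕ)) = (n3 : ℤ) - 2 * (k : ℕ) := by
    exact_mod_cast hk
  omega

/-- A weighting of an internal direct sum compatible with the bracket gives a derivation. -/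
lemma exists_derivation {g : Type*} [LieRing g] [LieAlgebra ℂ g] {ι : Type*} [DecidableEq ι]
    (U : ι → Submodule ℂ g) (hU : DirectSum.IsInternal U) (w : ι → ℂ)
    (hw : ∀ i j, ∀ x ∈ U i, ∀ y ∈ U j, ⁅x, y⁆ = 0 ∨ ∃ q, ⁅x, y⁆ ∈ U q ∧ w q = w i + w j) :
    ∃ D : LieDerivation ℂ g g, ∀ i, ∀ x ∈ U i, D x = w i • x := by
  let e := LinearEquiv.ofBijective (DirectSum.coeLinearMap U) hU
  let T : g →ₗ[ℂ] g :=
    (DirectSum.toModule ℂ ι g (fun i => w i • (U i).subtype)) ∘ₗ e.symm.toLinearMap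
  have hT : ∀ i, ∀ x ∈ U i, T x = w i • x := by
    intro i x hx
    have : e.symm x = DirectSum.lof ℂ ι (fun i => U i) i ⟨x, hx⟩ := by
      rw [LinearEquiv.symm_apply_eq]
      exact (DirectSum.coeLinearMap_lof U i ⟨x, hx⟩).symm
    simp [T, this]
  have htop : ∀ x : g, x ∈ ⨆ i, U i := by
    intro x; rw [hU.submodule_iSup_eq_top]; trivial
  have hleib : ∀ a b : g, T ⁅a, b⁆ = ⁅a, T b⁆ - ⁅b, T a⁆ := by
    intro a b
    induction htop a using Submodule.iSup_induction' with
    | zero => simp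
    | add x y _ _ hx hy =>
      rw [add_lie, map_add, hx, hy, map_add, lie_add, add_lie]; abel
    | mem i x hx =>
      induction htop b using Submodule.iSup_induction' with
      | zero => simp
      | add y z _ _ hy hz =>
        rw [lie_add, map_add, hy, hz, map_add, lie_add, add_lie]; abel
      | mem j y hy =>
        rw [hT i x hx, hT j y hy, lie_smul, lie_smul, ← lie_skew y x, smul_neg, sub_neg_eq_add,
          ← add_smul]
        rcases hw i j x hx y hy with h | ⟨q, hq, hq'⟩
        · rw [h]; simp
        · rw [hT q _ hq, hq', add_comm]
  exact ⟨⟨T, hleib⟩, hT⟩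

lemma isInternal_levi {g : Type*} [LieRing g] [LieAlgebra ℂ g]
    (s h : Submodule ℂ g) (hs : IsCompl s h)
    (V : Fin 4 → Submodule ℂ g) (hind : iSupIndep V) (hsup : (⨆ i, V i) = h) :
    DirectSum.IsInternal (fun o : Option (Fin 4) => o.elim s V) := by
  apply DirectSum.isInternal_submodule_of_iSupIndep_of_iSup_eq_top
  · intro o
    cases o with
    | none =>
      refine hs.disjoint.mono_right ?_
      refine iSup₂_le ?_
      rintro (_ | j) hj
      · exact absurd rfl hj
      · rw [← hsup]; exact le_iSup V j
    | some i =>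
      have h1 : (⨆ j, ⨆ (_ : j ≠ some i), (fun o : Option (Fin 4) => o.elim s V) j) ≤
          (⨆ j, ⨆ (_ : j ≠ i), V j) ⊔ s := by
        refine iSup₂_le ?_
        rintro (_ | j) hj
        · exact le_sup_right
        · exact le_sup_of_le_left (le_iSup₂_of_le j (by rintro rfl; exact hj rfl) le_rfl)
      refine Disjoint.mono_right h1 ?_
      refine Disjoint.disjoint_sup_right_of_disjoint_sup_left (hind i) ?_
      refine hs.disjoint.symm.mono_left ?_
      rw [← hsup]
      exact sup_le (le_iSup V i) (iSup₂_le fun j _ => le_iSup V j)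
  · rw [iSup_option]
    change s ⊔ ⨆ i, V i = ⊤
    rw [hsup, hs.sup_eq_top]

end Symp
namespace Symp

section

variable {g : Type*} [LieRing g] [LieAlgebra ℂ g]

lemma lie_mem_lieSpan2 {A B : Submodule ℂ g} {x y : g} (hx : x ∈ A) (hy : y ∈ B) :
    ⁅x, y⁆ ∈ lieSpan2 g A B :=
  Submodule.subset_span ⟨x, hx, y, hy, rfl⟩

lemma lieSpan2_le {A B C : Submodule ℂ g} (h : ∀ x ∈ A, ∀ y ∈ B, ⁅x, y⁆ ∈ C) :
    lieSpan2 g A B ≤ C := by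
  refine Submodule.span_le.2 ?_
  rintro _ ⟨x, hx, y, hy, rfl⟩
  exact h x hx y hy

lemma lieSpan2_mono {A B A' B' : Submodule ℂ g} (hA : A ≤ A') (hB : B ≤ B') :
    lieSpan2 g A B ≤ lieSpan2 g A' B' :=
  lieSpan2_le fun _ hx _ hy => lie_mem_lieSpan2 (hA hx) (hB hy)

lemma lieSpan2_comm (A B : Submodule ℂ g) : lieSpan2 g A B = lieSpan2 g B A := by
  apply le_antisymm <;> refine lieSpan2_le fun x hx y hy => ?_ <;>
    rw [← lie_skew] <;> exact neg_mem (lie_mem_lieSpan2 hy hx)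

lemma lie_eq_zero_of_lieSpan2 {A B : Submodule ℂ g} (h : lieSpan2 g A B = ⊥) {x y : g}
    (hx : x ∈ A) (hy : y ∈ B) : ⁅x, y⁆ = 0 := by
  have := lie_mem_lieSpan2 hx hy
  rw [h] at this
  simpa using this

/-- An element of a Lie algebra spanned by an `sl₂` triple commuting with the triple vanishes. -/
lemma eq_zero_of_commutes {s : Type*} [LieRing s] [LieAlgebra ℂ s] {H E F : s}
    (t : IsSl2Triple H E F) (hspan : ∀ x : s, ∃ a b c : ℂ, x = a • E + b • F + c • H)
    (x : s) (hx : ∀ y : s, ⁅y, x⁆ = 0) : x = 0 := by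
  obtain ⟨a, b, c, rfl⟩ := hspan x
  have hHE := t.lie_h_e_smul ℂ
  have hHF := t.lie_lie_smul_f ℂ
  have hEH : ⁅E, H⁆ = -((2 : ℂ) • E) := by rw [← lie_skew, hHE]
  have h1 : (2 * a) • E - (2 * b) • F = 0 := by
    rw [← hx H]
    simp only [lie_add, lie_smul, hHE, hHF, lie_self, smul_neg, smul_smul, smul_zero]
    rw [mul_comm a, mul_comm b]; abel
  have h2 : (4 * a) • E + (4 * b) • F = 0 := by
    have : ⁅H, (2 * a) • E - (2 * b) • F⁆ = 0 := by rw [h1, lie_zero]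
    rw [← this]
    simp only [lie_sub, lie_smul, hHE, hHF, smul_neg, smul_smul, sub_neg_eq_add]
    congr 2 <;> ring
  have h3 : (8 * a) • E = 0 := by
    have e : (8 * a) • E = (2 : ℂ) • ((2 * a) • E - (2 * b) • F) + ((4 * a) • E + (4 * b) • F) := by
      module
    rw [e, h1, h2]; simp
  have h4 : (8 * b) • F = 0 := by
    have e : (8 * b) • F = -(2 : ℂ) • ((2 * a) • E - (2 * b) • F) + ((4 * a) • E + (4 * b) • F) := by
      module
    rw [e, h1, h2]; simp
  have ha : a = 0 := by simpa [t.e_ne_zero] using h3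
  have hb : b = 0 := by simpa [t.f_ne_zero] using h4
  subst ha hb
  have h5 := hx E
  simp only [zero_smul, zero_add, lie_smul, hEH] at h5
  have hc : c = 0 := by simpa [t.e_ne_zero] using h5
  simp [hc]

end

end Symp

open Symp in
/-- for a sympathetic `g = sl₂(ℂ) ⋉ h` with 4 simple modules satisfying the
convention and `Z(h) = V_k` (here `V 3`), the dimension of `g` is odd. -/
theorem stmt15 (g : Type*) [LieRing g] [LieAlgebra ℂ g] [FiniteDimensional ℂ g]
    (hsymp : Symp.IsSympathetic g)
    (s : LieSubalgebra ℂ g) (hs : Symp.IsSl2Levi g s)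
    (V : Fin 4 → Submodule ℂ g) (hdec : Symp.IsDecomp g s V)
    (hconv : Symp.Convention g V)
    (hZ : Symp.centerRad g = V 3) :
    Odd (Module.finrank ℂ g) := by

  obtain ⟨-, hperf, hder⟩ := hsymp
  obtain ⟨⟨φ⟩, hcompl⟩ := hs
  obtain ⟨hirr, hind, hsup⟩ := hdec
  have hrad := radical_le_span hperf s hcompl
  obtain ⟨H, E, F, t, hspan, hs3⟩ := exists_sl2_triple φ
  choose n hn b hli hVb hb using fun i => irr_structure s H E F t hspan (V i) (hirr i)
  set h := LieAlgebra.radical ℂ g with hh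
  have hVh : ∀ i, V i ≤ h.toSubmodule := fun i => by rw [← hsup]; exact le_iSup V i
  have hV0 : ∀ i, V i ≠ ⊥ := fun i => (hirr i).1
  have hinj : Function.Injective V := hind.injective hV0
  have hnil : ∀ W : Submodule ℂ g, W ≤ lieSpan2 g h.toSubmodule W → W = ⊥ :=
    eq_bot_of_le_lieSpan2 hrad
  have hInternal := isInternal_levi s.toSubmodule h.toSubmodule hcompl V hind hsup
  have hzero : ∀ i j, lieSpan2 g (V i) (V j) = ⊥ ∨ ∃ q, lieSpan2 g (V i) (V j) = V q := by
    intro i j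
    by_cases h0 : lieSpan2 g (V i) (V j) = ⊥
    · exact Or.inl h0
    · exact Or.inr (hconv i j h0).exists
  have hcenter : ∀ x ∈ h, (∀ j, ∀ y ∈ V j, ⁅x, y⁆ = 0) → x ∈ V 3 := by
    intro x hx hxy
    rw [← hZ]
    refine ⟨hx, fun y hy => ?_⟩
    have hy' : y ∈ ⨆ i, V i := by rw [hsup]; exact hy
    induction hy' using Submodule.iSup_induction' with
    | zero => simp
    | mem i y hyi => exact hxy i y hyi
    | add y z hy1 hz1 h1 h2 =>
      rw [hsup] at hy1 hz1
      rw [lie_add, h1 hy1, h2 hz1, add_zero]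
  have hjac0 : ∀ i j k, (¬ ∃ t, lieSpan2 g (V j) (V k) = V t ∧
      ∃ u, lieSpan2 g (V i) (V t) = V u) →
      ∀ x ∈ V i, ∀ y ∈ V j, ∀ z ∈ V k, ⁅x, ⁅y, z⁆⁆ = 0 := by
    intro i j k hno x hx y hy z hz
    rcases hzero j k with h0 | ⟨t, ht⟩
    · rw [lie_eq_zero_of_lieSpan2 h0 hy hz, lie_zero]
    · have hyz : ⁅y, z⁆ ∈ V t := by rw [← ht]; exact lie_mem_lieSpan2 hy hz
      rcases hzero i t with h0 | ⟨u, hu⟩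
      · exact lie_eq_zero_of_lieSpan2 h0 hx hyz
      · exact absurd ⟨t, ht, u, hu⟩ hno
  have hcomb : Comb (fun i j q => lieSpan2 g (V i) (V j) = V q) n :=
    { comm := fun i j q hB => by rw [lieSpan2_comm]; exact hB
      par := by
        intro i j q hB
        refine parity_of_bracket (H : g) (n i) (n j) (n q) (b i) (b j) (b q) (hb i) (hb j) (hb q)
          (hli q) ?_
        rw [← hVb, ← hVb, ← hVb]; exact hB
      cyc1 := by
        intro i j hB
        refine hV0 i (hnil _ ?_)
        conv_lhs => rw [← hB, lieSpan2_comm]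
        exact lieSpan2_mono (hVh j) le_rfl
      cyc2 := by
        intro i j k q h1 h2
        refine hV0 i ?_
        have : V i ⊔ V q = ⊥ := by
          refine hnil _ (sup_le ?_ ?_)
          · conv_lhs => rw [← h2, lieSpan2_comm]
            exact lieSpan2_mono (hVh k) le_sup_right
          · conv_lhs => rw [← h1, lieSpan2_comm]
            exact lieSpan2_mono (hVh j) le_sup_left
        exact eq_bot_iff.2 (this ▸ le_sup_left)
      cen := by
        intro j q hB
        refine hV0 q ?_
        rw [← hB, eq_bot_iff]
        refine lieSpan2_le fun x hx y hy => ?_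
        rw [← hZ] at hx
        simp [hx.2 y (hVh j hy)]
      noncen := by
        intro i hi
        by_contra hno
        push Not at hno
        have h1 : V i ≤ V 3 := by
          intro x hx
          refine hcenter x (hVh i hx) fun j y hy => ?_
          rcases hzero i j with h0 | ⟨q, hq⟩
          · exact lie_eq_zero_of_lieSpan2 h0 hx hy
          · exact absurd hq (hno j q)
        exact hV0 i (disjoint_self.1 ((hind.pairwiseDisjoint hi).mono_right h1))
      func := fun i j q q' h1 h2 => hinj (h1.symm.trans h2)
      jac := by
        intro i j c k r h1 h2
        by_contra hno
        push Not at hno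
        obtain ⟨hno1, hno2⟩ := hno
        have z1 := hjac0 i j k (by push Not; exact hno1)
        have z2 := hjac0 j i k (by push Not; exact hno2)
        refine hV0 r ?_
        rw [← h2, eq_bot_iff]
        refine lieSpan2_le fun x hx y hy => ?_
        rw [← h1] at hx
        suffices ⁅x, y⁆ = 0 by simp [this]
        unfold lieSpan2 at hx
        induction hx using Submodule.span_induction with
        | zero => simp
        | add u v _ _ hu hv => rw [add_lie, hu, hv, add_zero]
        | smul c u _ hu => rw [smul_lie, hu, smul_zero]
        | mem u hu =>
          obtain ⟨p, hp, q, hq, rfl⟩ := hu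
          rw [lie_lie, z1 p hp q hq y hy, z2 q hq p hp y hy, sub_zero]
      wt := by
        intro w hw i
        obtain ⟨D, hD⟩ := exists_derivation _ hInternal
          (fun o : Option (Fin 4) => o.elim 0 (fun i => (w i : ℂ))) (by
            rintro (_ | i) (_ | j) x hx y hy
            · exact Or.inr ⟨none, s.lie_mem hx hy, by simp⟩
            · exact Or.inr ⟨some j, (hirr j).2.1 x hx y hy, by simp⟩
            · refine Or.inr ⟨some i, ?_, by simp⟩
              rw [← lie_skew]
              exact neg_mem ((hirr i).2.1 y hy x hx)
            · rcases hzero i j with h0 | ⟨q, hq⟩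
              · exact Or.inl (lie_eq_zero_of_lieSpan2 h0 hx hy)
              · refine Or.inr ⟨some q, ?_, ?_⟩
                · change _ ∈ V q
                  rw [← hq]; exact lie_mem_lieSpan2 hx hy
                · simp [hw i j q hq])
        obtain ⟨x, hx⟩ := hder D
        have hxtop : x ∈ s.toSubmodule ⊔ h.toSubmodule := by rw [hcompl.sup_eq_top]; trivial
        obtain ⟨a, ha, c, hc, rfl⟩ := Submodule.mem_sup.1 hxtop
        have ha0 : (⟨a, ha⟩ : s) = 0 := by
          refine eq_zero_of_commutes t hspan _ fun y => ?_
          have h1 : ⁅a + c, (y : g)⁆ = 0 := by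
            rw [← hx, hD none y y.2]; simp
          rw [add_lie] at h1
          have h2 : ⁅a, (y : g)⁆ ∈ h := by
            rw [eq_neg_of_add_eq_zero_left h1]
            exact neg_mem (lie_mem_left ℂ g h _ _ hc)
          have h3 : ⁅a, (y : g)⁆ ∈ s.toSubmodule ⊓ h.toSubmodule := ⟨s.lie_mem ha y.2, h2⟩
          rw [hcompl.inf_eq_bot, Submodule.mem_bot] at h3
          apply Subtype.ext
          change ⁅(y : g), a⁆ = 0
          rw [← lie_skew, h3, neg_zero]
        have ha1 : a = 0 := congrArg Subtype.val ha0
        subst ha1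
        by_contra hwi
        refine hV0 i (hnil _ fun v hv => ?_)
        have h1 : (w i : ℂ) • v = ⁅c, v⁆ := by
          have := hx v
          rw [hD (some i) v hv, zero_add] at this
          exact this
        have h2 : v = (w i : ℂ)⁻¹ • ⁅c, v⁆ := by
          rw [← h1, smul_smul, inv_mul_cancel₀ (by exact_mod_cast hwi), one_smul]
        rw [h2]
        exact Submodule.smul_mem _ _ (lie_mem_lieSpan2 hc hv) }
  have hpar := hcomb.even_sum
  have hdim : Module.finrank ℂ g = 3 + ∑ i, Module.finrank ℂ (V i) := by
    have e := (LinearEquiv.ofBijective (DirectSum.coeLinearMap _) hInternal).finrank_eq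
    rw [Module.finrank_directSum, Fintype.sum_option] at e
    rw [← e]
    change Module.finrank ℂ s + ∑ i, Module.finrank ℂ (V i) = _
    rw [hs3]
  rw [hdim, Fin.sum_univ_four, hn, hn, hn, hn, Nat.odd_iff]
  omega
end
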